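/- A discrete group G is C*-simple if and only if G has Powers' averaging property. -/

import Mathlib

noncomputable section
open scoped ENNReal ComplexOrder lp
open MeasureTheory
set_option maxHeartbeats 1000000
set_option synthInstance.maxHeartbeats 1000000

universe u

variable {G : Type u} [Group G]

theorem translat_mem (g : G) (f : ℓ²(G, ℂ)) : Memℓp (fun h => f (g⁻¹ * h)) 2 := by
  have hf : Summable fun i : G => ‖f i‖ ^ (2 : ℝ≥0∞).toReal :=
    (memℓp_gen_iff (by norm_num)).1 (lp.memℓp f)
  exact memℓp_gen ((Equiv.mulLeft g⁻¹).summable_iff.2 hf)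

/-- The left regular representation of `g ∈ G` as a linear isometric bijection of `ℓ²(G)`,
given by `(λ_g ξ)(h) = ξ(g⁻¹ h)`. -/
def lregE (g : G) : ℓ²(G, ℂ) ≃ₗᵢ[ℂ] ℓ²(G, ℂ) :=
{ toFun := fun f => ⟨fun h => f (g⁻¹ * h), translat_mem g f⟩
  invFun := fun f => ⟨fun h => f (g * h), by
    have := translat_mem g⁻¹ f; simp only [inv_inv] at this; exact this⟩
  map_add' := by intro f₁ f₂; ext h; simp [lp.coeFn_add]; rfl
  map_smul' := by intro c f; ext h; simp [lp.coeFn_smul]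
  left_inv := by intro f; ext h; simp
  right_inv := by intro f; ext h; simp
  norm_map' := by
    intro f
    rw [lp.norm_eq_tsum_rpow (by norm_num) f, lp.norm_eq_tsum_rpow (by norm_num)]
    congr 1
    exact (Equiv.mulLeft g⁻¹).tsum_eq (fun h => ‖f h‖ ^ (2 : ℝ≥0∞).toReal) }

/-- The left regular representation `λ` as bounded operators on `ℓ²(G)`. -/
def lreg (g : G) : ℓ²(G, ℂ) →L[ℂ] ℓ²(G, ℂ) :=
  (lregE g).toContinuousLinearEquiv.toContinuousLinearMap

variable (G) in
/-- The reduced group C*-algebra `C*_λ(G)`: the norm-closed star subalgebra of the algebra of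
bounded operators on `ℓ²(G)` generated by the image of the left regular representation. -/
def redCstar : StarSubalgebra ℂ (ℓ²(G, ℂ) →L[ℂ] ℓ²(G, ℂ)) :=
  (StarAlgebra.adjoin ℂ (Set.range (lreg (G := G)))).topologicalClosure

/-- `λ_g` as an element of the reduced group C*-algebra. -/
def uu (g : G) : redCstar G :=
  ⟨lreg g, StarSubalgebra.le_topologicalClosure _ (StarAlgebra.subset_adjoin ℂ _ ⟨g, rfl⟩)⟩

variable (G) in
/-- `G` is C*-simple: `C*_λ(G)` has no closed two-sided ideals other than `{0}` and the
whole algebra. -/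
def IsCstarSimple : Prop :=
  ∀ I : TwoSidedIdeal (redCstar G), IsClosed (I : Set (redCstar G)) → I = ⊥ ∨ I = ⊤

/-- The vector `δ_e ∈ ℓ²(G)`. -/
def deltaOne : ℓ²(G, ℂ) := letI := Classical.decEq G; lp.single 2 (1 : G) 1

variable (G) in
/-- The canonical tracial state `τ_λ(a) = ⟨a δ_e, δ_e⟩` on the reduced C*-algebra
(as a scalar-valued function). -/
def tauF (a : redCstar G) : ℂ :=
  inner (𝕜 := ℂ) (deltaOne (G := G)) ((a : ℓ²(G, ℂ) →L[ℂ] ℓ²(G, ℂ)) (deltaOne (G := G)))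

attribute [irreducible] redCstar lreg lregE deltaOne uu tauF

instance : NormedRing (redCstar G) := inferInstance
instance : NormedSpace ℂ (redCstar G) := inferInstance

variable (G) in
/-- `G` has Powers' averaging property: conjugate averages of any element of `C*_λ(G)` come
arbitrarily close (in norm) to the corresponding multiple of the identity given by the
canonical trace. -/
def HasPowersAveraging : Prop :=
  ∀ (a : redCstar G) (ε : ℝ), 0 < ε → ∃ (n : ℕ) (_ : 0 < n) (g : Fin n → G),
    ‖(n : ℂ)⁻¹ • (∑ i : Fin n, uu (g i) * a * uu (g i)⁻¹) - tauF G a • (1 : redCstar G)‖ < ε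



set_option linter.all false

/-! ### Means on `ℓ^∞(G)` -/

abbrev LI (G : Type u) := ℓ^∞(G, ℝ)

theorem li_abs_le {Y : Type u} (f : LI Y) (g : Y) : |f g| ≤ ‖f‖ := by
  have := lp.norm_apply_le_norm (p := ∞) (by simp) f g
  simpa using this

/-- bounded function as an element of `ℓ^∞` -/
def mkLI {Y : Type u} (f : Y → ℝ) (C : ℝ) (h : ∀ y, |f y| ≤ C) : LI Y :=
  ⟨f, memℓp_infty ⟨C, by rintro _ ⟨y, rfl⟩; simpa using h y⟩⟩

@[simp] theorem mkLI_apply {Y : Type u} (f : Y → ℝ) (C : ℝ) (h : ∀ y, |f y| ≤ C) (y : Y) :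
    mkLI f C h y = f y := rfl

theorem mkLI_norm_le {Y : Type u} (f : Y → ℝ) (C : ℝ) (hC : 0 ≤ C) (h : ∀ y, |f y| ≤ C) :
    ‖mkLI f C h‖ ≤ C :=
  lp.norm_le_of_forall_le hC (by intro i; simpa using h i)

theorem LI.ext {Y : Type u} {f g : LI Y} (h : ∀ y, f y = g y) : f = g := lp.ext (funext h)

@[simp] theorem LI.add_apply {Y : Type u} (f g : LI Y) (y : Y) : (f + g) y = f y + g y := rfl
@[simp] theorem LI.sub_apply {Y : Type u} (f g : LI Y) (y : Y) : (f - g) y = f y - g y := rfl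
@[simp] theorem LI.mul_apply {Y : Type u} (f g : LI Y) (y : Y) : (f * g) y = f y * g y := rfl
@[simp] theorem LI.smul_apply {Y : Type u} (c : ℝ) (g : LI Y) (y : Y) : (c • g) y = c * g y := rfl
@[simp] theorem LI.one_apply {Y : Type u} (y : Y) : (1 : LI Y) y = 1 := rfl

/-- left translation -/
def Lt (g : G) : LI G →ₗ[ℝ] LI G where
  toFun f := mkLI (fun h => f (g * h)) ‖f‖ (fun h => li_abs_le f _)
  map_add' f f' := LI.ext fun h => rfl
  map_smul' c f := LI.ext fun h => rfl

@[simp] theorem Lt_apply (g : G) (f : LI G) (h : G) : Lt g f h = f (g * h) := rfl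

theorem Lt_norm_le (g : G) (f : LI G) : ‖Lt g f‖ ≤ ‖f‖ :=
  mkLI_norm_le _ _ (norm_nonneg _) (fun _ => li_abs_le f _)

theorem Lt_Lt (g k : G) (f : LI G) : Lt g (Lt k f) = Lt (k * g) f :=
  LI.ext fun h => by simp [mul_assoc]

abbrev WD (G : Type u) := WeakDual ℝ (LI G)

theorem wd_le (μ : WD G) (f : LI G) : |μ f| ≤ ‖WeakDual.toStrongDual μ‖ * ‖f‖ := by
  have := (WeakDual.toStrongDual μ).le_opNorm f
  simpa using this

/-- build an element of the dual -/
def mkWD (φ : LI G →ₗ[ℝ] ℝ) (C : ℝ) (h : ∀ f, |φ f| ≤ C * ‖f‖) : WD G :=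
  StrongDual.toWeakDual (φ.mkContinuous C h)

@[simp] theorem mkWD_apply (φ : LI G →ₗ[ℝ] ℝ) (C : ℝ) (h : ∀ f, |φ f| ≤ C * ‖f‖) (f : LI G) :
    mkWD φ C h f = φ f := rfl

/-- Poisson transform -/
def Po (μ : WD G) : LI G →ₗ[ℝ] LI G where
  toFun f := mkLI (fun g => μ (Lt g f)) (‖WeakDual.toStrongDual μ‖ * ‖f‖) (fun g =>
    (wd_le μ _).trans (mul_le_mul_of_nonneg_left (Lt_norm_le g f) (norm_nonneg _)))
  map_add' f f' := LI.ext fun h => by simp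
  map_smul' c f := LI.ext fun h => by simp

@[simp] theorem Po_apply (μ : WD G) (f : LI G) (g : G) : Po μ f g = μ (Lt g f) := rfl

theorem Po_norm_le (μ : WD G) (f : LI G) : ‖Po μ f‖ ≤ ‖WeakDual.toStrongDual μ‖ * ‖f‖ :=
  mkLI_norm_le _ _ (by positivity) (fun g =>
    (wd_le μ _).trans (mul_le_mul_of_nonneg_left (Lt_norm_le g f) (norm_nonneg _)))

theorem Po_Lt (μ : WD G) (g : G) (f : LI G) : Po μ (Lt g f) = Lt g (Po μ f) :=
  LI.ext fun h => by simp [Lt_Lt]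

/-- convolution -/
def cv (ν μ : WD G) : WD G :=
  mkWD ((ν : LI G →L[ℝ] ℝ).toLinearMap.comp (Po μ))
    (‖WeakDual.toStrongDual ν‖ * ‖WeakDual.toStrongDual μ‖) (fun f => by
      refine (wd_le ν _).trans ?_
      rw [mul_assoc]
      exact mul_le_mul_of_nonneg_left (Po_norm_le μ f) (norm_nonneg _))

@[simp] theorem cv_apply (ν μ : WD G) (f : LI G) : cv ν μ f = ν (Po μ f) := rfl

theorem Po_cv (ν μ : WD G) (f : LI G) : Po (cv ν μ) f = Po ν (Po μ f) :=
  LI.ext fun g => by simp [Po_Lt]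

theorem cv_assoc (a b c : WD G) : cv (cv a b) c = cv a (cv b c) :=
  ContinuousLinearMap.ext fun f => by
    show a (Po b (Po c f)) = a (Po (cv b c) f)
    rw [Po_cv]

/-- means -/
def IsMean (μ : WD G) : Prop := μ 1 = 1 ∧ ∀ f : LI G, (∀ g, 0 ≤ f g) → 0 ≤ μ f

theorem pos_lin_bound {φ : LI G →ₗ[ℝ] ℝ} (h1 : φ 1 = 1)
    (hp : ∀ f : LI G, (∀ g, 0 ≤ f g) → 0 ≤ φ f) (f : LI G) : |φ f| ≤ 1 * ‖f‖ := by
  have h2 := hp (‖f‖ • 1 - f) (fun g => by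
    have := (abs_le.1 (li_abs_le f g)).2
    simp; linarith)
  have h3 := hp (‖f‖ • 1 + f) (fun g => by
    have := (abs_le.1 (li_abs_le f g)).1
    simp; linarith)
  simp [h1] at h2 h3
  rw [abs_le]; constructor <;> linarith

theorem IsMean.abs_le {μ : WD G} (h : IsMean μ) (f : LI G) : |μ f| ≤ ‖f‖ := by
  have := pos_lin_bound (φ := (μ : LI G →L[ℝ] ℝ).toLinearMap) h.1 h.2 f
  rwa [one_mul] at this

theorem IsMean.mono {μ : WD G} (h : IsMean μ) {f f' : LI G} (hf : ∀ g, f g ≤ f' g) :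
    μ f ≤ μ f' := by
  have := h.2 (f' - f) (fun g => by simpa using hf g)
  rw [map_sub] at this; linarith

/-- positive unital functionals are means -/
def mkMean (φ : LI G →ₗ[ℝ] ℝ) (h1 : φ 1 = 1)
    (hp : ∀ f : LI G, (∀ g, 0 ≤ f g) → 0 ≤ φ f) : WD G := mkWD φ 1 (pos_lin_bound h1 hp)

theorem mkMean_isMean (φ : LI G →ₗ[ℝ] ℝ) (h1 : φ 1 = 1)
    (hp : ∀ f : LI G, (∀ g, 0 ≤ f g) → 0 ≤ φ f) : IsMean (mkMean φ h1 hp) := ⟨h1, hp⟩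

@[simp] theorem mkMean_apply (φ : LI G →ₗ[ℝ] ℝ) (h1 : φ 1 = 1)
    (hp : ∀ f : LI G, (∀ g, 0 ≤ f g) → 0 ≤ φ f) (f : LI G) : mkMean φ h1 hp f = φ f := rfl

theorem Lt_one (g : G) : Lt g (1 : LI G) = 1 := LI.ext fun h => rfl

theorem Po_one {μ : WD G} (h : IsMean μ) : Po μ 1 = 1 := LI.ext fun g => by simp [Lt_one, h.1]

theorem IsMean.Po_nonneg {μ : WD G} (h : IsMean μ) {f : LI G} (hf : ∀ g, 0 ≤ f g) (g : G) :
    0 ≤ Po μ f g := h.2 _ (fun k => hf _)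

theorem IsMean.cv {ν μ : WD G} (hν : IsMean ν) (hμ : IsMean μ) : IsMean (cv ν μ) :=
  ⟨by simp [Po_one hμ, hν.1], fun _ hf => hν.2 _ (hμ.Po_nonneg hf)⟩

variable (G) in
theorem isCompact_means : IsCompact {μ : WD G | IsMean μ} := by
  refine (WeakDual.isCompact_closedBall (𝕜 := ℝ) (E := LI G) 0 1).of_isClosed_subset ?_ ?_
  · have : {μ : WD G | IsMean μ} = {μ : WD G | μ 1 = 1} ∩
        ⋂ f : LI G, ⋂ _ : (∀ g, 0 ≤ f g), {μ : WD G | 0 ≤ μ f} := by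
      ext μ; simp [IsMean]
    rw [this]
    refine IsClosed.inter (isClosed_eq (WeakDual.eval_continuous _) continuous_const) ?_
    exact isClosed_iInter fun f => isClosed_iInter fun _ =>
      isClosed_le continuous_const (WeakDual.eval_continuous _)
  · intro μ hμ
    simp only [Set.mem_preimage, Metric.mem_closedBall, dist_zero_right]
    refine ContinuousLinearMap.opNorm_le_bound _ zero_le_one fun f => ?_
    simpa using IsMean.abs_le hμ f

variable (G) in
/-- closed convex nonempty left ideals of means -/
def LeftId (K : Set (WD G)) : Prop :=
  K.Nonempty ∧ IsClosed K ∧ Convex ℝ K ∧ (∀ μ ∈ K, IsMean μ) ∧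
    ∀ ν μ, IsMean ν → μ ∈ K → cv ν μ ∈ K

variable (G) in
theorem leftId_all : LeftId G {μ : WD G | IsMean μ} := by
  refine ⟨?_, (isCompact_means G).isClosed, ?_, fun _ h => h, fun ν μ hν hμ => hν.cv hμ⟩
  · let ev : LI G →ₗ[ℝ] ℝ :=
      { toFun := fun f => f 1
        map_add' := fun _ _ => rfl
        map_smul' := fun _ _ => rfl }
    exact ⟨mkMean ev rfl (fun f hf => hf 1), mkMean_isMean _ _ _⟩
  · intro μ hμ ν hν a b ha hb hab
    refine ⟨?_, fun f hf => ?_⟩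
    · show a * μ 1 + b * ν 1 = 1
      rw [hμ.1, hν.1]; linarith
    · show 0 ≤ a * μ f + b * ν f
      have := hμ.2 f hf; have := hν.2 f hf; positivity

variable (G) in
theorem exists_min_leftId : ∃ K, LeftId G K ∧ ∀ K', LeftId G K' → K' ⊆ K → K' = K := by
  obtain ⟨K, hK⟩ := zorn_superset {K | LeftId G K} (by
    intro c hc hchain
    rcases c.eq_empty_or_nonempty with rfl | hne
    · exact ⟨_, leftId_all G, by simp⟩
    refine ⟨⋂₀ c, ⟨?_, ?_, ?_, ?_, ?_⟩, fun s hs => Set.sInter_subset_of_mem hs⟩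
    · refine IsCompact.nonempty_sInter_of_directed_nonempty_isCompact_isClosed
        (S := c) (hS := hne.to_subtype) ?_ ?_ ?_ ?_
      · intro a ha b hb
        rcases hchain.total ha hb with h | h
        · exact ⟨a, ha, subset_rfl, h⟩
        · exact ⟨b, hb, h, subset_rfl⟩
      · exact fun U hU => (hc hU).1
      · exact fun U hU => (isCompact_means G).of_isClosed_subset (hc hU).2.1 (hc hU).2.2.2.1
      · exact fun U hU => (hc hU).2.1
    · exact isClosed_sInter fun s hs => (hc hs).2.1
    · exact convex_sInter fun s hs => (hc hs).2.2.1
    · obtain ⟨s, hs⟩ := hne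
      exact fun μ hμ => (hc hs).2.2.2.1 _ (hμ s hs)
    · exact fun ν μ hν hμ s hs => (hc hs).2.2.2.2 _ _ hν (hμ s hs))
  refine ⟨K, hK.1, fun K' h' hle => ?_⟩
  exact subset_antisymm hle (hK.2 h' hle)


theorem cesaro_fixed {K : Set (WD G)} (hK : LeftId G K) {η : WD G} (hη : η ∈ K) :
    ∃ ν ∈ K, cv ν η = ν := by
  obtain ⟨⟨ν0, hν0⟩, hcl, hcv, hm, hid⟩ := hK
  have hcomp : IsCompact K := (isCompact_means G).of_isClosed_subset hcl hm
  let it : ℕ → WD G := fun n => (fun ν => cv ν η)^[n] ν0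
  have hit : ∀ n, it n ∈ K := by
    intro n
    induction n with
    | zero => exact hν0
    | succ n ih =>
      have : it (n + 1) = cv (it n) η := Function.iterate_succ_apply' _ _ _
      rw [this]; exact hid _ _ (hm _ ih) hη
  have hsucc : ∀ n, it (n + 1) = cv (it n) η := fun n => Function.iterate_succ_apply' _ _ _
  let c : ℕ → WD G := fun n => ∑ k ∈ Finset.range (n + 1), ((n : ℝ) + 1)⁻¹ • it k
  have hc : ∀ n, c n ∈ K := by
    intro n
    refine hcv.sum_mem (fun _ _ => by positivity) ?_ (fun k _ => hit k)
    simp; field_simp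
  have happ : ∀ n f, c n f = ((n : ℝ) + 1)⁻¹ * ∑ k ∈ Finset.range (n + 1), it k f := by
    intro n f
    have : c n f = ∑ k ∈ Finset.range (n + 1), (((n : ℝ) + 1)⁻¹ • it k) f := by
      let ev : WD G →+ ℝ :=
        { toFun := fun m => m f
          map_zero' := rfl
          map_add' := fun _ _ => rfl }
      exact map_sum ev _ _
    rw [this, Finset.mul_sum]; rfl
  obtain ⟨ν, hν, hlim⟩ := hcomp.ultrafilter_le_nhds ((Filter.hyperfilter ℕ).map c) (by
    rw [Filter.le_principal_iff]
    exact Filter.Eventually.of_forall (f := (Filter.hyperfilter ℕ : Filter ℕ)) hc)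
  have ht : Filter.Tendsto c (Filter.hyperfilter ℕ) (nhds ν) := hlim
  have ht' : ∀ f, Filter.Tendsto (fun n => c n f) (Filter.hyperfilter ℕ) (nhds (ν f)) :=
    fun f => ((WeakDual.eval_continuous f).tendsto ν).comp ht
  refine ⟨ν, hν, ContinuousLinearMap.ext fun f => ?_⟩
  show ν (Po η f) = ν f
  have h1 := (ht' (Po η f)).sub (ht' f)
  have h2 : Filter.Tendsto (fun n => c n (Po η f) - c n f) (Filter.hyperfilter ℕ) (nhds 0) := by
    refine Filter.Tendsto.mono_left ?_ Nat.hyperfilter_le_atTop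
    have hz : Filter.Tendsto (fun n : ℕ => (2 * ‖f‖) * (1 / ((n : ℝ) + 1))) Filter.atTop
        (nhds 0) := by
      simpa using (tendsto_one_div_add_atTop_nhds_zero_nat (𝕜 := ℝ)).const_mul (2 * ‖f‖)
    refine squeeze_zero_norm (fun n => ?_) hz
    have e : c n (Po η f) - c n f = ((n : ℝ) + 1)⁻¹ * (it (n + 1) f - it 0 f) := by
      rw [happ, happ, ← mul_sub, ← Finset.sum_sub_distrib]
      congr 1
      rw [← Finset.sum_range_sub (fun k => it k f)]
      refine Finset.sum_congr rfl fun k _ => ?_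
      rw [hsucc]; rfl
    rw [e, Real.norm_eq_abs, abs_mul, abs_of_pos (by positivity : (0 : ℝ) < ((n : ℝ) + 1)⁻¹),
      one_div, mul_comm (2 * ‖f‖)]
    gcongr
    have a1 := (hm _ (hit (n + 1))).abs_le f
    have a2 := (hm _ (hit 0)).abs_le f
    rw [abs_le] at *
    constructor <;> linarith
  have := tendsto_nhds_unique h1 h2
  linarith

variable (G) in
/-- The structure extracted from the boundary. -/
theorem exists_boundary_mean : ∃ μ : WD G, IsMean μ ∧
    (∀ f h : LI G, μ (f * Po μ h) = μ f * μ h) ∧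
    (∀ ν : WD G, IsMean ν → cv ν μ = ν → cv μ ν = μ) := by
  obtain ⟨K, hK, hmin⟩ := exists_min_leftId G
  have hz : ∀ ν ∈ K, ∀ η ∈ K, cv ν η = ν := by
    intro ν hν η hη
    have : {ν ∈ K | cv ν η = ν} = K := by
      refine hmin _ ⟨?_, ?_, ?_, ?_, ?_⟩ (fun x hx => hx.1)
      · obtain ⟨ν, h1, h2⟩ := cesaro_fixed hK hη
        exact ⟨ν, h1, h2⟩
      · have : {ν ∈ K | cv ν η = ν} = K ∩ ⋂ f : LI G, {ν : WD G | ν (Po η f) = ν f} := by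
          ext ν
          simp only [Set.mem_ofPred_eq, Set.mem_inter_iff, Set.mem_iInter]
          refine and_congr_right fun _ => ⟨fun h f => ?_, fun h => ContinuousLinearMap.ext h⟩
          exact DFunLike.congr_fun h f
        rw [this]
        exact hK.2.1.inter (isClosed_iInter fun f =>
          isClosed_eq (WeakDual.eval_continuous _) (WeakDual.eval_continuous _))
      · intro a ha b hb s t hs ht hst
        refine ⟨hK.2.2.1 ha.1 hb.1 hs ht hst, ContinuousLinearMap.ext fun f => ?_⟩
        have h1 : a (Po η f) = a f := DFunLike.congr_fun ha.2 f
        have h2 : b (Po η f) = b f := DFunLike.congr_fun hb.2 f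
        show s * a (Po η f) + t * b (Po η f) = s * a f + t * b f
        rw [h1, h2]
      · exact fun μ hμ => hK.2.2.2.1 _ hμ.1
      · intro ν' μ hν' hμ
        exact ⟨hK.2.2.2.2 _ _ hν' hμ.1, by rw [cv_assoc, hμ.2]⟩
    rw [← this] at hν
    exact hν.2
  have hcomp : IsCompact K := (isCompact_means G).of_isClosed_subset hK.2.1 hK.2.2.2.1
  have lcs : LocallyConvexSpace ℝ (WD G) :=
    inferInstanceAs (LocallyConvexSpace ℝ (WeakBilin (topDualPairing ℝ (LI G))))
  obtain ⟨μ, hμ⟩ := hcomp.extremePoints_nonempty hK.1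
  have hμK := hμ.1
  have hm : IsMean μ := hK.2.2.2.1 _ hμK
  have hμμ : ∀ f, μ (Po μ f) = μ f := fun f => DFunLike.congr_fun (hz μ hμK μ hμK) f
  have key : ∀ f : LI G, (∀ g, 1 / 4 ≤ f g ∧ f g ≤ 3 / 4) → ∀ h, μ (f * Po μ h) = μ f * μ h := by
    intro f hf h
    have hlo : 1 / 4 ≤ μ f := by
      have := hm.mono (f := (1 / 4 : ℝ) • 1) (f' := f) (fun g => by
        have := (hf g).1; simp at this ⊢; linarith)
      simpa [hm.1] using this
    have hhi : μ f ≤ 3 / 4 := by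
      have := hm.mono (f' := (3 / 4 : ℝ) • 1) (f := f) (fun g => by
        have := (hf g).2; simp at this ⊢; linarith)
      simpa [hm.1] using this
    have mk : ∀ q : LI G, (∀ g, 0 ≤ q g) → 0 < μ q →
        ∃ ν, IsMean ν ∧ ∀ x, ν x = (μ q)⁻¹ * μ (q * x) := by
      intro q hq hpos
      let φ : LI G →ₗ[ℝ] ℝ :=
        { toFun := fun x => (μ q)⁻¹ * μ (q * x)
          map_add' := fun x y => by simp [mul_add]
          map_smul' := fun c x => by
            have : q * c • x = c • (q * x) := LI.ext fun g => by simp only [LI.mul_apply, LI.smul_apply]; ring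
            rw [this, map_smul]; simp; ring }
      have h1 : φ 1 = 1 := by
        show (μ q)⁻¹ * μ (q * 1) = 1
        rw [mul_one]; exact inv_mul_cancel₀ hpos.ne'
      have h2 : ∀ x : LI G, (∀ g, 0 ≤ x g) → 0 ≤ φ x := by
        intro x hx
        exact mul_nonneg (inv_nonneg.2 hpos.le) (hm.2 _ fun g => mul_nonneg (hq g) (hx g))
      exact ⟨mkMean φ h1 h2, mkMean_isMean _ _ _, fun x => rfl⟩
    have hf' : μ (1 - f) = 1 - μ f := by rw [map_sub, hm.1]
    obtain ⟨ν1, hν1, e1⟩ := mk f (fun g => by linarith [(hf g).1]) (by linarith)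
    obtain ⟨ν2, hν2, e2⟩ := mk (1 - f) (fun g => by
      have := (hf g).2; simp at this ⊢; linarith) (by rw [hf']; linarith)
    have k1 := hK.2.2.2.2 _ _ hν1 hμK
    have k2 := hK.2.2.2.2 _ _ hν2 hμK
    have hseg : μ ∈ openSegment ℝ (cv ν1 μ) (cv ν2 μ) := by
      refine ⟨μ f, 1 - μ f, by linarith, by linarith, by ring, ContinuousLinearMap.ext fun x => ?_⟩
      show μ f * ν1 (Po μ x) + (1 - μ f) * ν2 (Po μ x) = μ x
      rw [e1, e2, hf', ← mul_assoc, ← mul_assoc, mul_inv_cancel₀ (by linarith),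
        mul_inv_cancel₀ (by linarith), one_mul, one_mul, ← map_add, ← add_mul]
      simp [hμμ]
    have := hμ.2 k1 k2 hseg
    have h3 : ν1 (Po μ h) = μ h := DFunLike.congr_fun this h
    rw [e1, inv_mul_eq_iff_eq_mul₀ (by linarith)] at h3
    exact h3
  refine ⟨μ, hm, fun f h => ?_, fun ν hν hνμ => ?_⟩
  · set c : ℝ := 4 * (‖f‖ + 1) with hc
    have hc0 : 0 < c := by positivity
    have := key ((1 / 2 : ℝ) • 1 + c⁻¹ • f) (fun g => by
      have h1 := abs_le.1 (li_abs_le f g)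
      have h2 : c⁻¹ * f g ≤ 1 / 4 := by
        rw [inv_mul_le_iff₀ hc0]; linarith [h1.2]
      have h3 : -(1 / 4) ≤ c⁻¹ * f g := by
        rw [← neg_le_neg_iff, neg_neg, ← mul_neg, inv_mul_le_iff₀ hc0]; linarith [h1.1]
      simp only [LI.add_apply, LI.smul_apply, LI.one_apply]
      constructor <;> linarith) h
    simp only [add_mul, map_add, smul_mul_assoc, one_mul, map_smul, hm.1, hμμ, smul_eq_mul] at this
    have h5 : c⁻¹ * μ (f * Po μ h) = c⁻¹ * (μ f * μ h) := by linarith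
    exact mul_left_cancel₀ (inv_ne_zero hc0.ne') h5
  · have : ν ∈ K := by
      rw [← hνμ]; exact hK.2.2.2.2 _ _ hν hμK
    exact hz _ hμK _ this


/-! ### States -/

/-- States of a unital C*-algebra. -/
def IsSt {B : Type*} [CStarAlgebra B] (φ : B →ₗ[ℂ] ℂ) : Prop :=
  φ 1 = 1 ∧ ∀ T : B, 0 ≤ φ (star T * T)

section States

variable {B : Type*} [CStarAlgebra B] {φ : B →ₗ[ℂ] ℂ}

theorem IsSt.conj_symm (h : IsSt φ) (S T : B) :
    φ (star T * S) = (starRingEnd ℂ) (φ (star S * T)) := by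
  have h1 := (Complex.nonneg_iff.1 (h.2 (S + T))).2
  have h2 := (Complex.nonneg_iff.1 (h.2 (S + Complex.I • T))).2
  have h3 := (Complex.nonneg_iff.1 (h.2 S)).2
  have h4 := (Complex.nonneg_iff.1 (h.2 T)).2
  simp only [star_add, star_smul, add_mul, mul_add, smul_mul_assoc, mul_smul_comm, map_add,
    map_smul, smul_eq_mul, Complex.add_im, Complex.mul_im, Complex.mul_re, Complex.I_re, Complex.I_im,
    RCLike.star_def, Complex.conj_I, Complex.neg_re, Complex.neg_im] at h1 h2
  apply Complex.ext
  · rw [Complex.conj_re]; linarith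
  · rw [Complex.conj_im]; linarith

theorem IsSt.map_star (h : IsSt φ) (S : B) : φ (star S) = (starRingEnd ℂ) (φ S) := by
  have := h.conj_symm 1 S
  simpa using this

theorem IsSt.im_eq_zero (h : IsSt φ) {S : B} (hS : star S = S) : (φ S).im = 0 := by
  have := h.map_star S
  rw [hS] at this
  exact Complex.conj_eq_iff_im.1 this.symm

theorem IsSt.cs_zero (h : IsSt φ) {T : B} (hT : φ (star T * T) = 0) (S : B) :
    φ (star S * T) = 0 := by
  by_contra hne
  have hpos : 0 < Complex.normSq (φ (star S * T)) := Complex.normSq_pos.2 hne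
  obtain ⟨r, hr⟩ := exists_nat_gt ((φ (star S * S)).re / Complex.normSq (φ (star S * T)))
  rw [div_lt_iff₀ hpos] at hr
  have h1 := (Complex.nonneg_iff.1 (h.2
    (S + (-(r : ℂ) * (starRingEnd ℂ) (φ (star S * T))) • T))).1
  simp only [star_add, star_smul, add_mul, mul_add, smul_mul_assoc, mul_smul_comm, map_add,
    map_smul, smul_eq_mul, hT, h.conj_symm S T, mul_zero, add_zero, RCLike.star_def, map_mul,
    map_neg, Complex.conj_conj, Complex.conj_natCast] at h1
  have e : (-(r : ℂ) * (starRingEnd ℂ) (φ (star S * T)) * φ (star S * T)).re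
      = - (r * Complex.normSq (φ (star S * T))) := by
    rw [mul_assoc, mul_comm _ (φ (star S * T)), Complex.mul_conj]; simp
  have e' : (-(r : ℂ) * φ (star S * T) * (starRingEnd ℂ) (φ (star S * T))).re
      = - (r * Complex.normSq (φ (star S * T))) := by
    rw [mul_assoc, Complex.mul_conj]; simp
  rw [Complex.add_re, Complex.add_re, e, e'] at h1
  nlinarith

theorem IsSt.nonneg [PartialOrder B] [StarOrderedRing B] (h : IsSt φ) {T : B} (hT : 0 ≤ T) :
    0 ≤ φ T := by
  obtain ⟨b, rfl⟩ := CStarAlgebra.nonneg_iff_eq_star_mul_self.1 hT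
  exact h.2 b

theorem IsSt.norm_le [PartialOrder B] [StarOrderedRing B] (h : IsSt φ) (T : B) :
    ‖φ T‖ ≤ ‖T‖ := by
  have h1 := h.2 (T - φ T • 1)
  have h2 : 0 ≤ φ (algebraMap ℝ B (‖T‖ ^ 2) - star T * T) :=
    h.nonneg (sub_nonneg.2 CStarAlgebra.star_mul_le_algebraMap_norm_sq)
  have e : φ (star (T - φ T • 1) * (T - φ T • 1)) = φ (star T * T) - ((‖φ T‖ ^ 2 : ℝ) : ℂ) := by
    simp only [star_sub, star_smul, sub_mul, mul_sub, smul_mul_assoc, mul_smul_comm, map_sub,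
      map_smul, smul_eq_mul, star_one, one_mul, mul_one, h.1, h.map_star, RCLike.star_def]
    rw [← Complex.normSq_eq_norm_sq, ← Complex.mul_conj]
    ring
  have e2 : φ (algebraMap ℝ B (‖T‖ ^ 2) - star T * T) = ((‖T‖ ^ 2 : ℝ) : ℂ) - φ (star T * T) := by
    rw [map_sub, Algebra.algebraMap_eq_smul_one]
    congr 1
    have : ((‖T‖ ^ 2 : ℝ) • (1 : B)) = ((‖T‖ ^ 2 : ℝ) : ℂ) • (1 : B) := by
      rw [Complex.coe_smul]
    rw [this, map_smul, h.1]; simp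
  rw [e] at h1
  rw [e2] at h2
  have h3 := add_nonneg h1 h2
  rw [sub_add_sub_comm, add_comm, add_sub_add_right_eq_sub, ← Complex.ofReal_sub,
    Complex.zero_le_real] at h3
  exact abs_le_of_sq_le_sq' (by linarith) (norm_nonneg _) |>.2

/-- complexifying a real functional into a state -/
theorem isSt_extend (r : B →ₗ[ℝ] ℝ) (h1 : r 1 = 1) (hp : ∀ T, 0 ≤ r (star T * T))
    (hi : ∀ T, r (Complex.I • (star T * T)) = 0) :
    IsSt (Module.Dual.extendRCLike (𝕜 := ℂ) r) := by
  refine ⟨?_, fun T => ?_⟩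
  · rw [Module.Dual.extendRCLike_apply]
    have := hi 1
    simp only [star_one, mul_one] at this
    simp [h1, this]
  · rw [Module.Dual.extendRCLike_apply]
    have := hi T
    have hpT := hp T
    simp only [RCLike.I_to_complex, this]
    simpa using hpT

theorem extend_re (r : B →ₗ[ℝ] ℝ) (T : B) :
    (Module.Dual.extendRCLike (𝕜 := ℂ) r T).re = r T :=
  Module.Dual.re_extendRCLike_apply (𝕜 := ℂ) r T

end States

/-! ### Operators on `ℓ²(Y)` -/

abbrev BH (Y : Type u) := ℓ²(Y, ℂ) →L[ℂ] ℓ²(Y, ℂ)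

section Ops

variable {Y : Type u} [MulAction G Y]

theorem l2_ext {Y : Type u} {f g : ℓ²(Y, ℂ)} (h : ∀ y, f y = g y) : f = g := lp.ext (funext h)

theorem BH.ext {Y : Type u} {S T : BH Y} (h : ∀ f y, S f y = T f y) : S = T :=
  ContinuousLinearMap.ext fun f => l2_ext (h f)

theorem perm_mem (g : G) (f : ℓ²(Y, ℂ)) : Memℓp (fun y => f (g⁻¹ • y)) 2 := by
  have hf : Summable fun i : Y => ‖f i‖ ^ (2 : ℝ≥0∞).toReal :=
    (memℓp_gen_iff (by norm_num)).1 (lp.memℓp f)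
  exact memℓp_gen ((MulAction.toPerm g⁻¹).summable_iff.2 hf)

/-- permutation unitaries -/
def Up (g : G) : BH Y :=
  LinearMap.mkContinuous
    { toFun := fun f => (⟨fun y => f (g⁻¹ • y), perm_mem g f⟩ : ℓ²(Y, ℂ))
      map_add' := fun _ _ => l2_ext fun _ => rfl
      map_smul' := fun _ _ => l2_ext fun _ => rfl } 1 (by
    intro f
    rw [one_mul]
    apply le_of_eq
    rw [lp.norm_eq_tsum_rpow (by norm_num) f, lp.norm_eq_tsum_rpow (by norm_num)]
    congr 1
    exact (MulAction.toPerm g⁻¹).tsum_eq (fun h => ‖f h‖ ^ (2 : ℝ≥0∞).toReal))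

@[simp] theorem Up_apply (g : G) (f : ℓ²(Y, ℂ)) (y : Y) : (Up g : BH Y) f y = f (g⁻¹ • y) := rfl

theorem Up_mul (g h : G) : (Up g : BH Y) * Up h = Up (g * h) := BH.ext fun f y => by
  simp [mul_smul]

theorem Up_one : (Up (1 : G) : BH Y) = 1 := BH.ext fun f y => by
  simp

theorem Up_inv_mul (g : G) : (Up g⁻¹ : BH Y) * Up g = 1 := by
  rw [Up_mul, inv_mul_cancel, Up_one]

theorem Up_mul_inv (g : G) : (Up g : BH Y) * Up g⁻¹ = 1 := by
  rw [Up_mul, mul_inv_cancel, Up_one]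

theorem Up_star (g : G) : star (Up g : BH Y) = Up g⁻¹ := by
  rw [ContinuousLinearMap.star_eq_adjoint]
  symm
  rw [ContinuousLinearMap.eq_adjoint_iff]
  intro x y
  rw [lp.inner_eq_tsum, lp.inner_eq_tsum, ← (MulAction.toPerm g⁻¹).tsum_eq]
  simp

/-- multiplication operators -/
def Mo {Y : Type u} (v : LI Y) : BH Y :=
  LinearMap.mkContinuous
    { toFun := fun f => (⟨fun y => (v y : ℂ) * f y, Memℓp.mono' (lp.memℓp (‖v‖ • f)) (by
        intro y
        have := li_abs_le v y
        simp only [lp.coeFn_smul, Pi.smul_apply, norm_mul, Complex.norm_real, Real.norm_eq_abs,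
          norm_smul, abs_norm]
        gcongr)⟩ : ℓ²(Y, ℂ))
      map_add' := fun _ _ => l2_ext fun _ => mul_add _ _ _
      map_smul' := fun _ _ => l2_ext fun _ => mul_left_comm _ _ _ } ‖v‖ (by
    intro f
    have e : ‖v‖ * ‖f‖ = ‖(‖v‖ • f)‖ := by rw [norm_smul, norm_norm]
    refine le_trans ?_ e.ge
    refine lp.norm_mono (by norm_num) fun y => ?_
    have := li_abs_le v y
    simp only [lp.coeFn_smul, Pi.smul_apply, norm_mul, norm_smul, Real.norm_eq_abs, abs_norm]
    show ‖(v y : ℂ) * f y‖ ≤ _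
    rw [norm_mul, Complex.norm_real, Real.norm_eq_abs]
    gcongr)

@[simp] theorem Mo_apply {Y : Type u} (v : LI Y) (f : ℓ²(Y, ℂ)) (y : Y) :
    Mo v f y = (v y : ℂ) * f y := rfl

theorem Mo_add {Y : Type u} (v w : LI Y) : Mo (v + w) = Mo v + Mo w := BH.ext fun f y => by
  show ((v y + w y : ℝ) : ℂ) * f y = (v y : ℂ) * f y + (w y : ℂ) * f y
  push_cast; ring

theorem Mo_smul {Y : Type u} (c : ℝ) (w : LI Y) : Mo (c • w) = (c : ℂ) • Mo w := BH.ext fun f y => by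
  show ((c * w y : ℝ) : ℂ) * f y = (c : ℂ) * ((w y : ℂ) * f y)
  push_cast; ring

theorem Mo_mul {Y : Type u} (v w : LI Y) : Mo (v * w) = Mo v * Mo w := BH.ext fun f y => by
  show ((v y * w y : ℝ) : ℂ) * f y = (v y : ℂ) * ((w y : ℂ) * f y)
  push_cast; ring

theorem Mo_one {Y : Type u} : Mo (1 : LI Y) = 1 := BH.ext fun f y => by
  show ((1 : ℝ) : ℂ) * f y = f y
  simp

theorem Mo_star {Y : Type u} (v : LI Y) : star (Mo v) = Mo v := by
  rw [ContinuousLinearMap.star_eq_adjoint]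
  symm
  rw [ContinuousLinearMap.eq_adjoint_iff]
  intro x y
  rw [lp.inner_eq_tsum, lp.inner_eq_tsum]
  congr 1
  ext i
  simp [mul_left_comm, mul_assoc]

theorem Up_Mo (g : G) (v w : LI Y) (h : ∀ y, w y = v (g • y)) :
    (Up g⁻¹ : BH Y) * Mo v * Up g = Mo w := BH.ext fun f y => by
  show (v (g⁻¹⁻¹ • y) : ℂ) * f (g⁻¹ • g⁻¹⁻¹ • y) = (w y : ℂ) * f y
  simp [h]

theorem lreg_eq (g : G) : lreg g = (Up g : BH G) := BH.ext fun f y => by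
  unfold lreg lregE; rfl

/-- a state restricted to multiplication operators is a mean-like functional -/
theorem Mo_nonneg {Y : Type u} {φ : BH Y →ₗ[ℂ] ℂ} (h : IsSt φ) (v : LI Y) (hv : ∀ y, 0 ≤ v y) :
    0 ≤ φ (Mo v) := by
  have hb : ∀ y, |Real.sqrt (v y)| ≤ Real.sqrt ‖v‖ := fun y => by
    rw [abs_of_nonneg (Real.sqrt_nonneg _)]
    exact Real.sqrt_le_sqrt ((le_abs_self _).trans (li_abs_le v y))
  have := h.2 (Mo (mkLI (fun y => Real.sqrt (v y)) _ hb))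
  rw [Mo_star, ← Mo_mul] at this
  convert this using 2
  congr 1
  exact LI.ext fun y => (Real.mul_self_sqrt (hv y)).symm

end Ops


/-! ### Averaging states -/

section Avg

variable {Y : Type u} [MulAction G Y]

theorem Up_norm_le (g : G) : ‖(Up g : BH Y)‖ ≤ 1 :=
  LinearMap.mkContinuous_norm_le _ zero_le_one _

theorem Up_conj_norm_le (g : G) (b : BH Y) : ‖(Up g⁻¹ : BH Y) * b * Up g‖ ≤ ‖b‖ := by
  have h1 := Up_norm_le (Y := Y) g
  have h2 := Up_norm_le (Y := Y) g⁻¹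
  calc _ ≤ ‖(Up g⁻¹ : BH Y) * b‖ * ‖(Up g : BH Y)‖ := norm_mul_le _ _
    _ ≤ (‖(Up g⁻¹ : BH Y)‖ * ‖b‖) * ‖(Up g : BH Y)‖ := by gcongr; exact norm_mul_le _ _
    _ ≤ (1 * ‖b‖) * 1 := by gcongr
    _ = ‖b‖ := by ring

variable (G) in
/-- the bounded function `g ↦ Re φ(g⁻¹ b g)` -/
def avR {φ : BH Y →ₗ[ℂ] ℂ} (h : IsSt φ) : BH Y →ₗ[ℝ] LI G where
  toFun b := mkLI (fun g => (φ (Up g⁻¹ * b * Up g)).re) ‖b‖ (fun g =>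
    (Complex.abs_re_le_norm _).trans ((h.norm_le _).trans (Up_conj_norm_le g b)))
  map_add' a b := LI.ext fun g => by simp [mul_add, add_mul]
  map_smul' c b := LI.ext fun g => by
    have : (c • b) = (c : ℂ) • b := BH.ext fun f y => rfl
    simp only [this, mul_smul_comm, smul_mul_assoc, map_smul, smul_eq_mul, mkLI_apply,
      Complex.re_ofReal_mul, LI.smul_apply, RingHom.id_apply]

@[simp] theorem avR_apply {φ : BH Y →ₗ[ℂ] ℂ} (h : IsSt φ) (b : BH Y) (g : G) :
    avR G h b g = (φ (Up g⁻¹ * b * Up g)).re := rfl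

/-- the averaged state -/
def avS (μ : WD G) {φ : BH Y →ₗ[ℂ] ℂ} (h : IsSt φ) : BH Y →ₗ[ℂ] ℂ :=
  Module.Dual.extendRCLike (𝕜 := ℂ) ((μ : LI G →L[ℝ] ℝ).toLinearMap.comp (avR G h))

theorem avS_re (μ : WD G) {φ : BH Y →ₗ[ℂ] ℂ} (h : IsSt φ) (b : BH Y) :
    (avS μ h b).re = μ (avR G h b) := extend_re _ _

theorem avS_im (μ : WD G) {φ : BH Y →ₗ[ℂ] ℂ} (h : IsSt φ) (b : BH Y) :
    (avS μ h b).im = - μ (avR G h (Complex.I • b)) :=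
  Module.Dual.im_extendRCLike_apply (𝕜 := ℂ) _ _

theorem conj_star_mul (g : G) (T : BH Y) :
    (Up g⁻¹ : BH Y) * (star T * T) * Up g = star (T * Up g) * (T * Up g) := by
  rw [star_mul, Up_star]; simp only [mul_assoc]

theorem isSt_avS {μ : WD G} (hμ : IsMean μ) {φ : BH Y →ₗ[ℂ] ℂ} (h : IsSt φ) :
    IsSt (avS μ h) := by
  refine isSt_extend _ ?_ ?_ ?_
  · have : avR G h 1 = 1 := LI.ext fun g => by simp [Up_inv_mul, h.1]
    show μ (avR G h 1) = 1
    rw [this, hμ.1]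
  · intro T
    refine hμ.2 _ fun g => ?_
    rw [avR_apply, conj_star_mul]
    exact (Complex.nonneg_iff.1 (h.2 _)).1
  · intro T
    have : avR G h (Complex.I • (star T * T)) = 0 := LI.ext fun g => by
      rw [avR_apply, mul_smul_comm, smul_mul_assoc, conj_star_mul, map_smul]
      have := (Complex.nonneg_iff.1 (h.2 (T * Up g))).2
      rw [smul_eq_mul, Complex.I_mul_re, ← this, neg_zero]; rfl
    show μ (avR G h (Complex.I • (star T * T))) = 0
    rw [this, map_zero]

/-- boundary means -/
structure BM (μ : WD G) : Prop where
  mean : IsMean μ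
  mult : ∀ f h : LI G, μ (f * Po μ h) = μ f * μ h
  fix : ∀ ν : WD G, IsMean ν → cv ν μ = ν → cv μ ν = μ

variable {μ : WD G}

theorem BM.Po_fix (hμ : BM μ) (f : LI G) : μ (Po μ f) = μ f := by
  have := hμ.mult 1 f
  rwa [one_mul, hμ.mean.1, one_mul] at this

theorem BM.Po_Po (hμ : BM μ) (f : LI G) : Po μ (Po μ f) = Po μ f := LI.ext fun g => by
  rw [Po_apply, ← Po_Lt, hμ.Po_fix]; rfl

theorem BM.Po_mul (hμ : BM μ) (f h : LI G) : Po μ f * Po μ h = Po μ (f * Po μ h) := LI.ext fun g => by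
  have : Lt g (f * Po μ h) = Lt g f * Po μ (Lt g h) := by rw [Po_Lt]; rfl
  rw [Po_apply, this, hμ.mult]; rfl

end Avg

section LemA

variable {Y : Type u} [MulAction G Y]

/-- transported Poisson transform -/
def tl (μ : WD G) (s : Y → G) : LI G →ₗ[ℝ] LI Y where
  toFun f := mkLI (fun y => Po μ f (s y)) ‖Po μ f‖ (fun y => li_abs_le _ _)
  map_add' a b := LI.ext fun y => by simp
  map_smul' a b := LI.ext fun y => by simp

@[simp] theorem tl_apply (μ : WD G) (s : Y → G) (f : LI G) (y : Y) :
    tl μ s f y = Po μ f (s y) := rfl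

/-- compatible section -/
structure Sec (μ : WD G) (y0 : Y) (s : Y → G) : Prop where
  sec : ∀ y, s y • y0 = y
  stab : ∀ h : G, h • y0 = y0 → ∀ f, μ (Lt h f) = μ f

variable {μ : WD G} {y0 : Y} {s : Y → G}

theorem Sec.tl_smul (hs : Sec μ y0 s) (f : LI G) (g : G) (y : Y) :
    tl μ s f (g • y) = Po μ f (g * s y) := by
  have h1 : ((g * s y)⁻¹ * s (g • y)) • y0 = y0 := by
    rw [mul_smul, hs.sec, inv_smul_eq_iff, mul_smul, hs.sec]
  have h2 := hs.stab _ h1 (Lt (g * s y) f)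
  rw [Lt_Lt] at h2
  rw [tl_apply, Po_apply, Po_apply]
  convert h2 using 3
  group

theorem Sec.tl_Lt (hs : Sec μ y0 s) (f : LI G) (g : G) (y : Y) :
    tl μ s (Lt g f) y = tl μ s f (g • y) := by
  rw [hs.tl_smul, tl_apply, Po_Lt]; rfl

theorem tl_mul (hμ : BM μ) (f h : LI G) : tl μ s f * tl μ s h = tl μ s (f * Po μ h) :=
  LI.ext fun y => by
    have := hμ.Po_mul f h
    rw [tl_apply, ← this]; rfl

theorem tl_one (hμ : BM μ) : tl μ s 1 = 1 := LI.ext fun y => by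
    rw [tl_apply, Po_one hμ.mean]; rfl

variable {θ : BH Y →ₗ[ℂ] ℂ}

theorem lemA_val (hμ : BM μ) (hs : Sec μ y0 s) (hθ : IsSt θ) (f : LI G) :
    avS μ hθ (Mo (tl μ s f)) = μ f := by
  have hψ := isSt_avS hμ.mean hθ
  apply Complex.ext
  · let L : LI G →ₗ[ℝ] ℝ :=
      { toFun := fun f => (θ (Mo (tl μ s f))).re
        map_add' := fun a b => by simp [Mo_add]
        map_smul' := fun c a => by simp [Mo_smul] }
    have hL1 : L 1 = 1 := by
      show (θ (Mo (tl μ s 1))).re = 1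
      rw [tl_one hμ, Mo_one, hθ.1]; rfl
    have hLp : ∀ f : LI G, (∀ g, 0 ≤ f g) → 0 ≤ L f := fun f hf =>
      (Complex.nonneg_iff.1 (Mo_nonneg hθ _ fun y => hμ.mean.Po_nonneg hf _)).1
    let ν := mkMean L hL1 hLp
    have hν : IsMean ν := mkMean_isMean _ _ _
    have hνμ : cv ν μ = ν := ContinuousLinearMap.ext fun f => by
      show (θ (Mo (tl μ s (Po μ f)))).re = (θ (Mo (tl μ s f))).re
      have : tl μ s (Po μ f) = tl μ s f := LI.ext fun y => by
        rw [tl_apply, hμ.Po_Po]; rfl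
      rw [this]
    have := DFunLike.congr_fun (hμ.fix ν hν hνμ) f
    rw [avS_re, Complex.ofReal_re, ← this]
    show _ = μ (Po ν f)
    congr 1
    refine LI.ext fun g => ?_
    rw [avR_apply, Up_Mo g _ _ (hs.tl_Lt f g)]
    rfl
  · rw [Complex.ofReal_im]
    exact hψ.im_eq_zero (Mo_star _)

theorem lemA_zero (hμ : BM μ) (hs : Sec μ y0 s) (hθ : IsSt θ) (f : LI G) :
    avS μ hθ (star (Mo (tl μ s f) - (μ f : ℂ) • 1) * (Mo (tl μ s f) - (μ f : ℂ) • 1)) = 0 := by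
  have hψ := isSt_avS hμ.mean hθ
  simp only [star_sub, star_smul, sub_mul, mul_sub, smul_mul_assoc, mul_smul_comm, map_sub,
      map_smul, smul_eq_mul, star_one, one_mul, mul_one, hψ.1, RCLike.star_def, Mo_star,
      Complex.conj_ofReal, ← Mo_mul, tl_mul hμ, lemA_val hμ hs hθ, hμ.mult]
  push_cast
  ring

theorem lemA_right (hμ : BM μ) (hs : Sec μ y0 s) (hθ : IsSt θ) (f : LI G) (b : BH Y) :
    avS μ hθ (b * Mo (tl μ s f)) = avS μ hθ b * μ f := by
  have hψ := isSt_avS hμ.mean hθ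
  have := hψ.cs_zero (lemA_zero hμ hs hθ f) (star b)
  rw [star_star, mul_sub, map_sub, mul_smul_comm, map_smul, mul_one, smul_eq_mul, sub_eq_zero]
    at this
  rw [this, mul_comm]

theorem lemA_left (hμ : BM μ) (hs : Sec μ y0 s) (hθ : IsSt θ) (f : LI G) (b : BH Y) :
    avS μ hθ (Mo (tl μ s f) * b) = avS μ hθ b * μ f := by
  have hψ := isSt_avS hμ.mean hθ
  have := hψ.map_star (star b * Mo (tl μ s f))
  rw [star_mul, star_star, Mo_star, lemA_right hμ hs hθ, hψ.map_star, map_mul (starRingEnd ℂ), Complex.conj_conj,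
    Complex.conj_ofReal] at this
  exact this

end LemA


/-! ### Vanishing of averaged states -/

theorem Lt_id (f : LI G) : Lt (1 : G) f = f := LI.ext fun h => by simp

/-- stabilizer of a mean -/
def Hm (μ : WD G) : Subgroup G where
  carrier := {t | ∀ f, μ (Lt t f) = μ f}
  mul_mem' := by
    intro a b ha hb f
    rw [← Lt_Lt, hb, ha]
  one_mem' := by
    intro f; rw [Lt_id]
  inv_mem' := by
    intro a ha f
    rw [← ha (Lt a⁻¹ f), Lt_Lt, inv_mul_cancel, Lt_id]

theorem mem_Hm {μ : WD G} {t : G} : t ∈ Hm μ ↔ ∀ f, μ (Lt t f) = μ f := Iff.rfl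

theorem sec_G (μ : WD G) : Sec μ (1 : G) (id : G → G) :=
  ⟨fun y => by simp, fun h hh f => by
    have : h = 1 := by simpa using hh
    rw [this, Lt_id]⟩

/-- a section of the quotient map -/
def sH (μ : WD G) : G ⧸ Hm μ → G := fun y => Quotient.out y

theorem sH_eq (μ : WD G) (y : G ⧸ Hm μ) : ((sH μ y : G) : G ⧸ Hm μ) = y := Quotient.out_eq' y

theorem sec_H (μ : WD G) : Sec μ ((1 : G) : G ⧸ Hm μ) (sH μ) := by
  refine ⟨fun y => ?_, fun h hh f => ?_⟩
  · rw [MulAction.Quotient.smul_coe, smul_eq_mul, mul_one]; exact sH_eq μ y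
  · rw [MulAction.Quotient.smul_coe, smul_eq_mul, mul_one, QuotientGroup.eq, mul_one] at hh
    exact mem_Hm.1 ((Subgroup.inv_mem_iff _).1 hh) f

theorem Po_avR {Y : Type u} [MulAction G Y] (μ : WD G) {φ : BH Y →ₗ[ℂ] ℂ} (h : IsSt φ) (b : BH Y)
    (g : G) : Po μ (avR G h b) g = (avS μ h (Up g⁻¹ * b * Up g)).re := by
  rw [avS_re, Po_apply]
  congr 1
  refine LI.ext fun k => ?_
  rw [Lt_apply, avR_apply, avR_apply, mul_inv_rev, ← Up_mul, ← Up_mul]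
  simp only [mul_assoc]

theorem stepI {μ : WD G} (hμ : BM μ) {φ : BH G →ₗ[ℂ] ℂ} (h : IsSt φ) {t : G}
    (ht : avS μ h (Up t) ≠ 0) : t ∈ Hm μ := by
  rw [← Subgroup.inv_mem_iff, mem_Hm]
  intro f
  have h1 := lemA_right hμ (sec_G μ) h f (Up t)
  have h2 := lemA_left hμ (sec_G μ) h (Lt t⁻¹ f) (Up t)
  have h3 := Up_Mo t⁻¹ _ _ ((sec_G μ).tl_Lt f t⁻¹)
  rw [inv_inv] at h3
  rw [← h3, mul_assoc, Up_inv_mul, mul_one, h1] at h2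
  exact_mod_cast (mul_left_cancel₀ ht h2).symm

theorem stepII {μ : WD G} (hμ : BM μ) {φ : BH G →ₗ[ℂ] ℂ} (h : IsSt φ)
    {θ : BH (G ⧸ Hm μ) →ₗ[ℂ] ℂ} (hθ : IsSt θ) (hθ0 : ∀ t : G, t ≠ 1 → θ (Up t) = 0)
    {t : G} (ht : t ≠ 1) : avS μ h (Up t) = 0 := by
  have hψ : avS μ hθ (Up t) = 0 := by
    have hz : ∀ c : ℂ, avR G hθ (c • Up t) = 0 := fun c => LI.ext fun g => by
      rw [avR_apply, mul_smul_comm, smul_mul_assoc, Up_mul, Up_mul, map_smul, hθ0]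
      · simp
      · intro hh
        apply ht
        have := congrArg (fun x => g * x * g⁻¹) hh
        simpa [mul_assoc] using this
    apply Complex.ext
    · have := hz 1
      rw [one_smul] at this
      rw [avS_re, this]; simp
    · rw [avS_im, hz]; simp
  have key : ∀ c : ℂ, μ (avR G h (c • Up t)) = 0 := by
    intro c
    set f0 := avR G h (c • Up t) with hf0
    have hM : Mo (tl μ (sH μ) f0) * Up t
        = Mo (tl μ (sH μ) f0) := by
      refine BH.ext fun f y => ?_
      show ((tl μ (sH μ) f0 y : ℝ) : ℂ) * f (t⁻¹ • y)
        = ((tl μ (sH μ) f0 y : ℝ) : ℂ) * f y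
      by_cases hy : tl μ (sH μ) f0 y = 0
      · rw [hy]; simp
      suffices hfix : t⁻¹ • y = y by rw [hfix]
      rw [tl_apply, hf0, Po_avR, mul_smul_comm, smul_mul_assoc, Up_mul, Up_mul, map_smul] at hy
      have hmem := stepI hμ h (t := (sH μ y)⁻¹ * t * sH μ y) (fun h0 => hy (by rw [h0]; simp))
      rw [inv_smul_eq_iff]
      conv_lhs => rw [← sH_eq μ y]
      conv_rhs => rw [← sH_eq μ y]
      change ((sH μ y : G) : G ⧸ Hm μ) = t • ((sH μ y : G) : G ⧸ Hm μ)
      rw [MulAction.Quotient.smul_coe, QuotientGroup.eq, smul_eq_mul, ← mul_assoc]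
      exact hmem
    have h1 := lemA_left hμ (sec_H μ) hθ f0 (Up t)
    rw [hM, lemA_val hμ (sec_H μ) hθ, hψ, zero_mul] at h1
    exact_mod_cast h1
  apply Complex.ext
  · have := key 1
    rw [one_smul] at this
    rw [avS_re, this]; rfl
  · rw [avS_im, key]; simp


/-! ### Reiter's condition for the stabilizer -/

theorem l1_ext {Y : Type u} {f g : ℓ¹(Y, ℝ)} (h : ∀ y, f y = g y) : f = g := lp.ext (funext h)

/-- translation on `ℓ¹` -/
def T1 (g : G) : ℓ¹(G, ℝ) →ₗ[ℝ] ℓ¹(G, ℝ) where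
  toFun f := ⟨fun y => f (g⁻¹ * y), by
    have hf : Summable fun i : G => ‖f i‖ ^ (1 : ℝ≥0∞).toReal :=
      (memℓp_gen_iff (by norm_num)).1 (lp.memℓp f)
    exact memℓp_gen ((Equiv.mulLeft g⁻¹).summable_iff.2 hf)⟩
  map_add' _ _ := l1_ext fun _ => rfl
  map_smul' _ _ := l1_ext fun _ => rfl

@[simp] theorem T1_apply (g : G) (f : ℓ¹(G, ℝ)) (y : G) : T1 g f y = f (g⁻¹ * y) := rfl

open Classical in
/-- point masses -/
def pm (g : G) : ℓ¹(G, ℝ) := lp.single 1 g (1 : ℝ)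

open Classical in
theorem pm_apply (g y : G) : pm g y = if y = g then 1 else 0 := by
  rw [pm, lp.single_apply]; simp [Pi.single_apply]

open Classical in
theorem pm_norm (g : G) : ‖pm g‖ = 1 := by
  unfold pm; rw [lp.norm_single (by norm_num)]; simp

open Classical in
theorem T1_pm (g h : G) : T1 g (pm h) = pm (g * h) := l1_ext fun y => by
  rw [T1_apply, pm_apply, pm_apply]
  exact if_congr inv_mul_eq_iff_eq_mul rfl rfl

theorem l1_summable {Y : Type u} (p : ℓ¹(Y, ℝ)) : Summable fun y => |p y| := by
  have := (memℓp_gen_iff (by norm_num)).1 (lp.memℓp p)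
  simpa using this

theorem l1_norm {Y : Type u} (p : ℓ¹(Y, ℝ)) : ‖p‖ = ∑' y, |p y| := by
  rw [lp.norm_eq_tsum_rpow (by norm_num)]; simp

/-- equivariant retraction onto a subgroup -/
theorem exists_retract (H : Subgroup G) : ∃ κ : G → G, (∀ g, κ g ∈ H) ∧
    ∀ h ∈ H, ∀ g, κ (h * g) = h * κ g := by
  refine ⟨fun g => g * (Quotient.out ((g⁻¹ : G) : G ⧸ H)), fun g => ?_, fun h hh g => ?_⟩
  · have : ((Quotient.out ((g⁻¹ : G) : G ⧸ H) : G) : G ⧸ H) = ((g⁻¹ : G) : G ⧸ H) :=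
      Quotient.out_eq' _
    have h2 := QuotientGroup.eq.1 this.symm
    simpa using h2
  · have : (((h * g)⁻¹ : G) : G ⧸ H) = ((g⁻¹ : G) : G ⧸ H) := by
      rw [QuotientGroup.eq]; simpa using hh
    simp only [this, mul_assoc]

open Classical in
theorem reiter {μ : WD G} (hμ : IsMean μ) (F : Finset G) (hF : ∀ h ∈ F, h ∈ Hm μ) {ε : ℝ}
    (hε : 0 < ε) : ∃ p : ℓ¹(G, ℝ), (∀ g, 0 ≤ p g) ∧ (∀ g, g ∉ Hm μ → p g = 0) ∧
      HasSum (fun g => p g) 1 ∧ ∀ h ∈ F, ‖T1 h p - p‖ < ε := by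
  let Λ : ℓ¹(G, ℝ) →ₗ[ℝ] (F → ℓ¹(G, ℝ)) := LinearMap.pi fun h => T1 (h : G) - LinearMap.id
  let C : Set (ℓ¹(G, ℝ)) := convexHull ℝ (pm '' (Hm μ : Set G))
  have hC : ∀ p ∈ C, (∀ g, 0 ≤ p g) ∧ (∀ g, g ∉ Hm μ → p g = 0) ∧ HasSum (fun g => p g) 1 := by
    have : C ⊆ {p : ℓ¹(G, ℝ) | (∀ g, 0 ≤ p g) ∧ (∀ g, g ∉ Hm μ → p g = 0) ∧
        HasSum (fun g => p g) 1} := by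
      refine convexHull_min ?_ ?_
      · rintro _ ⟨g, hg, rfl⟩
        refine ⟨fun y => ?_, fun y hy => ?_, ?_⟩
        · rw [pm_apply]; split_ifs <;> norm_num
        · rw [pm_apply, if_neg]; rintro rfl; exact hy hg
        · simp only [pm_apply]
          exact hasSum_ite_eq g 1
      · rintro p ⟨h1, h2, h3⟩ q ⟨k1, k2, k3⟩ a b ha hb hab
        refine ⟨fun y => ?_, fun y hy => ?_, ?_⟩
        · show 0 ≤ a * p y + b * q y
          have := h1 y; have := k1 y; positivity
        · show a * p y + b * q y = 0
          rw [h2 y hy, k2 y hy]; simp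
        · have := (h3.mul_left a).add (k3.mul_left b)
          rw [mul_one, mul_one, hab] at this
          exact this
    exact fun p hp => this hp
  have hcl : (0 : F → ℓ¹(G, ℝ)) ∈ closure (Λ '' C) := by
    by_contra hn
    have hconv : Convex ℝ (Λ '' C) := (convex_convexHull ℝ _).linear_image Λ
    obtain ⟨L, u, hu, hL⟩ := geometric_hahn_banach_point_closed hconv.closure isClosed_closure hn
    rw [map_zero] at hu
    have hL' : ∀ g ∈ Hm μ, u < ∑ h : F, (L (Pi.single h (pm (h * g))) - L (Pi.single h (pm g))) := by
      intro g hg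
      have := hL (Λ (pm g)) (subset_closure ⟨_, subset_convexHull _ _ ⟨g, hg, rfl⟩, rfl⟩)
      have e : Λ (pm g) = ∑ h : F, (Pi.single h (pm (h * g)) - Pi.single h (pm g)) := by
        funext k
        rw [Finset.sum_apply]
        simp only [Pi.sub_apply, Pi.single_apply]
        rw [Finset.sum_sub_distrib]
        simp [Λ, T1_pm]
      rw [e, map_sum] at this
      simpa only [map_sub] using this
    obtain ⟨κ, hκ, hκ'⟩ := exists_retract (Hm μ)
    let f : F → LI G := fun h => mkLI (fun g => L (Pi.single h (pm (κ g)))) (‖L‖ * 1) (fun g => by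
      have := L.le_opNorm (Pi.single h (pm (κ g)))
      rw [Pi.norm_single, pm_norm] at this
      exact this)
    let Φ : LI G := ∑ h : F, (Lt (h : G) (f h) - f h)
    have hΦ : μ Φ = 0 := by
      show μ (∑ h : F, (Lt (h : G) (f h) - f h)) = 0
      rw [map_sum]
      refine Finset.sum_eq_zero fun h _ => ?_
      rw [map_sub, sub_eq_zero]
      exact hF _ h.2 _
    have hΦ' : ∀ g, (u • (1 : LI G)) g ≤ Φ g := by
      intro g
      have := (hL' (κ g) (hκ g)).le
      have e : Φ g = ∑ h : F, (Lt (h : G) (f h) - f h) g := by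
        show (∑ h : F, (Lt (h : G) (f h) - f h) : LI G) g = _
        rw [lp.coeFn_sum, Finset.sum_apply]
      rw [e, LI.smul_apply, LI.one_apply, mul_one]
      refine this.trans (le_of_eq (Finset.sum_congr rfl fun h _ => ?_))
      rw [LI.sub_apply, Lt_apply]
      simp only [f, mkLI_apply]
      rw [hκ' _ (hF _ h.2)]
    have := hμ.mono hΦ'
    rw [hΦ, map_smul, hμ.1, smul_eq_mul, mul_one] at this
    linarith
  obtain ⟨_, ⟨p, hp, rfl⟩, hd⟩ := Metric.mem_closure_iff.1 hcl ε hε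
  refine ⟨p, (hC p hp).1, (hC p hp).2.1, (hC p hp).2.2, fun h hh => ?_⟩
  rw [dist_zero_left] at hd
  exact (norm_le_pi_norm (Λ p) ⟨h, hh⟩).trans_lt hd

theorem sqrt_sub_sq_le {a b : ℝ} (ha : 0 ≤ a) (hb : 0 ≤ b) :
    (Real.sqrt a - Real.sqrt b) ^ 2 ≤ |a - b| := by
  have h1 := Real.sq_sqrt ha
  have h2 := Real.sq_sqrt hb
  have h3 := Real.sqrt_nonneg a
  have h4 := Real.sqrt_nonneg b
  rcases le_total (Real.sqrt a) (Real.sqrt b) with h | h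
  · refine le_trans ?_ (neg_le_abs _)
    nlinarith
  · refine le_trans ?_ (le_abs_self _)
    nlinarith

theorem l2_norm_sq {Y : Type u} (f : ℓ²(Y, ℂ)) : HasSum (fun y => ‖f y‖ ^ 2) (‖f‖ ^ 2) := by
  have := lp.hasSum_norm (p := 2) (by norm_num) f
  simpa using this

theorem reiter2 {μ : WD G} (hμ : IsMean μ) (F : Finset G) (hF : ∀ h ∈ F, h ∈ Hm μ) {ε : ℝ}
    (hε : 0 < ε) : ∃ ξ : ℓ²(G, ℂ), ‖ξ‖ = 1 ∧ (∀ g, g ∉ Hm μ → ξ g = 0) ∧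
      ∀ h ∈ F, ‖(Up h : BH G) ξ - ξ‖ < ε := by
  obtain ⟨p, h1, h2, h3, h4⟩ := reiter hμ F hF (ε := ε ^ 2) (by positivity)
  let ξ : ℓ²(G, ℂ) := ⟨fun g => (Real.sqrt (p g) : ℂ), memℓp_gen (by
    have : ∀ g, ‖(Real.sqrt (p g) : ℂ)‖ ^ (2 : ℝ≥0∞).toReal = p g := fun g => by
      rw [Complex.norm_real, Real.norm_eq_abs, abs_of_nonneg (Real.sqrt_nonneg _)]
      simp [Real.sq_sqrt (h1 g)]
    simp only [this]
    exact h3.summable)⟩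
  have hξ : ∀ g, ξ g = (Real.sqrt (p g) : ℂ) := fun g => rfl
  refine ⟨ξ, ?_, fun g hg => ?_, fun h hh => ?_⟩
  · have a1 := l2_norm_sq ξ
    have : (fun y => ‖ξ y‖ ^ 2) = fun y => p y := by
      funext g
      rw [hξ, Complex.norm_real, Real.norm_eq_abs, sq_abs, Real.sq_sqrt (h1 g)]
    rw [this] at a1
    have := a1.unique h3
    rcases (show ‖ξ‖ = 1 ∨ ‖ξ‖ = -1 by simpa using this) with h | h
    · exact h
    · have := norm_nonneg ξ; linarith
  · rw [hξ, h2 g hg]; simp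
  · have a1 := l2_norm_sq ((Up h : BH G) ξ - ξ)
    have a2 := l1_summable (T1 h p - p)
    have a3 := h4 h hh
    rw [l1_norm] at a3
    have : ‖(Up h : BH G) ξ - ξ‖ ^ 2 ≤ ∑' y, |(T1 h p - p) y| := by
      refine hasSum_le (fun y => ?_) a1 a2.hasSum
      show ‖(Real.sqrt (p (h⁻¹ * y)) : ℂ) - (Real.sqrt (p y) : ℂ)‖ ^ 2 ≤ |p (h⁻¹ * y) - p y|
      rw [← Complex.ofReal_sub, Complex.norm_real, Real.norm_eq_abs, sq_abs]
      exact sqrt_sub_sq_le (h1 _) (h1 _)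
    exact lt_of_pow_lt_pow_left₀ 2 hε.le (this.trans_lt a3)


/-! ### Weak containment of the quasi-regular representation -/

open Classical in
/-- basis vectors of `ℓ²` -/
def dl {Y : Type u} (y : Y) : ℓ²(Y, ℂ) := lp.single 2 y (1 : ℂ)

open Classical in
theorem dl_apply {Y : Type u} (y z : Y) : dl y z = if z = y then 1 else 0 := by
  rw [dl, lp.single_apply]; simp [Pi.single_apply]

open Classical in
theorem dl_norm {Y : Type u} (y : Y) : ‖dl y‖ = 1 := by
  unfold dl; rw [lp.norm_single (by norm_num)]; simp

open Classical in
theorem single_eq {Y : Type u} (y : Y) (c : ℂ) : lp.single 2 y c = c • dl y := by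
  unfold dl; rw [← lp.single_smul]; simp

open Classical in
theorem hasSum_dl {Y : Type u} (f : ℓ²(Y, ℂ)) : HasSum (fun y => f y • dl y) f := by
  have := lp.hasSum_single (p := 2) (by norm_num) f
  simpa only [single_eq] using this

open Classical in
theorem Up_dl {Y : Type u} [MulAction G Y] (g : G) (y : Y) : (Up g : BH Y) (dl y) = dl (g • y) :=
  l2_ext fun z => by
    rw [Up_apply, dl_apply, dl_apply]
    exact if_congr inv_smul_eq_iff rfl rfl

theorem Up_norm_eq {Y : Type u} [MulAction G Y] (g : G) (f : ℓ²(Y, ℂ)) :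
    ‖(Up g : BH Y) f‖ = ‖f‖ := by
  apply le_antisymm
  · have := (Up g : BH Y).le_of_opNorm_le (Up_norm_le g) f
    rwa [one_mul] at this
  · have := (Up g⁻¹ : BH Y).le_of_opNorm_le (Up_norm_le g⁻¹) ((Up g : BH Y) f)
    rw [one_mul, ← ContinuousLinearMap.mul_apply, Up_inv_mul] at this
    exact this

open Classical in
theorem exists_W {μ : WD G} {ξ : ℓ²(G, ℂ)} (h1 : ‖ξ‖ = 1) (h2 : ∀ g, g ∉ Hm μ → ξ g = 0) :
    ∃ W : ℓ²(G ⧸ Hm μ, ℂ) →ₗᵢ[ℂ] ℓ²(G, ℂ), ∀ j, W (dl j) = (Up (sH μ j) : BH G) ξ := by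
  have hv : Orthonormal ℂ (fun j : G ⧸ Hm μ => (Up (sH μ j) : BH G) ξ) := by
    refine ⟨fun j => by rw [Up_norm_eq, h1], fun i j hij => ?_⟩
    show inner ℂ ((Up (sH μ i) : BH G) ξ) ((Up (sH μ j) : BH G) ξ) = 0
    rw [lp.inner_eq_tsum]
    convert tsum_zero with k
    by_cases hk : ((k : G) : G ⧸ Hm μ) = i
    · have : (Up (sH μ j) : BH G) ξ k = 0 := by
        rw [Up_apply]
        apply h2
        intro hmem
        apply hij
        rw [← hk, ← sH_eq μ j]
        exact (QuotientGroup.eq.2 hmem).symm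
      rw [this]; simp
    · have : (Up (sH μ i) : BH G) ξ k = 0 := by
        rw [Up_apply]
        apply h2
        intro hmem
        apply hk
        rw [← sH_eq μ i]
        exact (QuotientGroup.eq.2 hmem).symm
      rw [this]; simp
  refine ⟨hv.orthogonalFamily.linearIsometry, fun j => ?_⟩
  unfold dl
  rw [OrthogonalFamily.linearIsometry_apply_single]
  simp

open Classical in
theorem weak_cont_fin {μ : WD G} (hμ : IsMean μ) (S : Finset G) (c : G → ℂ)
    (J : Finset (G ⧸ Hm μ)) (η : G ⧸ Hm μ → ℂ) :
    ‖(∑ g ∈ S, c g • (Up g : BH (G ⧸ Hm μ))) (∑ j ∈ J, η j • dl j)‖ ≤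
      ‖∑ g ∈ S, c g • (Up g : BH G)‖ * ‖∑ j ∈ J, η j • dl j‖ := by
  set K : ℝ := ∑ g ∈ S, ∑ j ∈ J, ‖c g‖ * ‖η j‖ with hK
  have hK0 : 0 ≤ K := by positivity
  refine le_of_forall_pos_le_add fun δ hδ => ?_
  have hε : 0 < δ / (K + 1) := by positivity
  obtain ⟨ξ, h1, h2, h3⟩ := reiter2 hμ
    ((S ×ˢ J).image fun q => (sH μ (q.1 • q.2))⁻¹ * q.1 * sH μ q.2) (by
      intro h hh
      obtain ⟨q, -, rfl⟩ := Finset.mem_image.1 hh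
      rw [mul_assoc, ← QuotientGroup.eq, sH_eq, ← smul_eq_mul, ← MulAction.Quotient.smul_coe,
        sH_eq]) hε
  obtain ⟨W, hW⟩ := exists_W h1 h2
  set a : BH G := ∑ g ∈ S, c g • (Up g : BH G) with ha
  set b : BH (G ⧸ Hm μ) := ∑ g ∈ S, c g • (Up g : BH (G ⧸ Hm μ)) with hb
  set x : ℓ²(G ⧸ Hm μ, ℂ) := ∑ j ∈ J, η j • dl j with hx
  have e1 : W (b x) = ∑ g ∈ S, ∑ j ∈ J, (c g * η j) • (Up (sH μ (g • j)) : BH G) ξ := by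
    have : b x = ∑ g ∈ S, ∑ j ∈ J, (c g * η j) • dl (g • j) := by
      simp only [hb, sum_apply, smul_apply]
      refine Finset.sum_congr rfl fun g _ => ?_
      rw [hx, map_sum, Finset.smul_sum]
      refine Finset.sum_congr rfl fun j _ => ?_
      rw [map_smul, Up_dl, smul_smul]
    rw [this]
    simp only [map_sum, map_smul, hW]
  have e2 : a (W x) = ∑ g ∈ S, ∑ j ∈ J, (c g * η j) • (Up g : BH G) ((Up (sH μ j) : BH G) ξ) := by
    simp only [ha, sum_apply, smul_apply]
    refine Finset.sum_congr rfl fun g _ => ?_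
    rw [hx, map_sum, map_sum, Finset.smul_sum]
    refine Finset.sum_congr rfl fun j _ => ?_
    rw [map_smul, map_smul, hW, smul_smul]
  have e3 : ‖W (b x) - a (W x)‖ ≤ K * (δ / (K + 1)) := by
    rw [e1, e2, ← Finset.sum_sub_distrib, hK, Finset.sum_mul]
    refine norm_sum_le_of_le _ fun g hg => ?_
    rw [← Finset.sum_sub_distrib, Finset.sum_mul]
    refine norm_sum_le_of_le _ fun j hj => ?_
    rw [← smul_sub, norm_smul, norm_mul]
    refine mul_le_mul_of_nonneg_left ?_ (by positivity)
    have := h3 _ (Finset.mem_image.2 ⟨(g, j), Finset.mem_product.2 ⟨hg, hj⟩, rfl⟩)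
    rw [← Up_norm_eq (sH μ (g • j)), map_sub, ← ContinuousLinearMap.mul_apply, Up_mul] at this
    rw [norm_sub_rev, ← ContinuousLinearMap.mul_apply, Up_mul]
    refine le_of_eq_of_le ?_ this.le
    congr 4
    group
  have e4 : K * (δ / (K + 1)) ≤ δ := by
    rw [mul_div_assoc', div_le_iff₀ (by positivity)]
    nlinarith
  calc ‖b x‖ = ‖W (b x)‖ := (W.norm_map _).symm
    _ = ‖a (W x) + (W (b x) - a (W x))‖ := by rw [add_sub_cancel]
    _ ≤ ‖a (W x)‖ + ‖W (b x) - a (W x)‖ := norm_add_le _ _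
    _ ≤ ‖a‖ * ‖x‖ + δ := by
      have := a.le_opNorm (W x)
      rw [W.norm_map] at this
      linarith

theorem weak_cont {μ : WD G} (hμ : IsMean μ) (S : Finset G) (c : G → ℂ) :
    ‖∑ g ∈ S, c g • (Up g : BH (G ⧸ Hm μ))‖ ≤ ‖∑ g ∈ S, c g • (Up g : BH G)‖ := by
  refine ContinuousLinearMap.opNorm_le_bound _ (norm_nonneg _) fun x => ?_
  have h : Filter.Tendsto (fun J : Finset (G ⧸ Hm μ) => ∑ j ∈ J, x j • dl j) Filter.atTop
    (nhds x) := hasSum_dl x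
  refine le_of_tendsto_of_tendsto'
    (((ContinuousLinearMap.continuous (∑ g ∈ S, c g • (Up g : BH (G ⧸ Hm μ)))).tendsto x).comp h).norm
    (h.norm.const_mul _) fun J => ?_
  exact weak_cont_fin hμ S c J x


/-! ### Density of the span and the joint representation -/

theorem adjoin_le_span {B : Type*} [CStarAlgebra B] (w : G → B) (hm : ∀ g h, w g * w h = w (g * h))
    (hs : ∀ g, star (w g) = w g⁻¹) (h1 : w 1 = 1) (x : B)
    (hx : x ∈ StarAlgebra.adjoin ℂ (Set.range w)) : x ∈ Submodule.span ℂ (Set.range w) := by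
  induction hx using StarAlgebra.adjoin_induction with
  | mem x hx => exact Submodule.subset_span hx
  | algebraMap r =>
    rw [Algebra.algebraMap_eq_smul_one, ← h1]
    exact Submodule.smul_mem _ _ (Submodule.subset_span ⟨1, rfl⟩)
  | add x y _ _ hx hy => exact Submodule.add_mem _ hx hy
  | mul x y _ _ hx hy =>
    have := Submodule.mul_mem_mul hx hy
    rw [Submodule.span_mul_span] at this
    refine Submodule.span_mono ?_ this
    rintro _ ⟨_, ⟨g, rfl⟩, _, ⟨h, rfl⟩, rfl⟩
    exact ⟨g * h, (hm g h).symm⟩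
  | star x hmem hx =>
    clear hmem
    induction hx using Submodule.span_induction with
    | mem x hx =>
      obtain ⟨g, rfl⟩ := hx
      rw [hs]
      exact Submodule.subset_span ⟨g⁻¹, rfl⟩
    | zero => rw [star_zero]; exact Submodule.zero_mem _
    | add x y _ _ hx hy => rw [star_add]; exact Submodule.add_mem _ hx hy
    | smul c x _ hx => rw [star_smul]; exact Submodule.smul_mem _ _ hx

theorem range_lreg : Set.range (lreg (G := G)) = Set.range (fun g : G => (Up g : BH G)) := by
  congr 1; ext1 g; exact lreg_eq g

theorem red_ind (S : Submodule ℂ (BH G)) (hc : IsClosed (S : Set (BH G)))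
    (hS : ∀ g : G, (Up g : BH G) ∈ S) (a : BH G) (ha : a ∈ redCstar G) : a ∈ S := by
  unfold redCstar at ha
  rw [range_lreg, ← SetLike.mem_coe, StarSubalgebra.topologicalClosure_coe] at ha
  refine closure_minimal ?_ hc ha
  intro x hx
  have := adjoin_le_span (fun g : G => (Up g : BH G)) Up_mul Up_star Up_one x hx
  refine Submodule.span_le.2 ?_ this
  rintro _ ⟨g, rfl⟩
  exact hS g

theorem Up_mem_red (g : G) : (Up g : BH G) ∈ redCstar G := by
  unfold redCstar
  rw [range_lreg]
  exact StarSubalgebra.le_topologicalClosure _ (StarAlgebra.subset_adjoin ℂ _ ⟨g, rfl⟩)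

theorem red_closed : IsClosed (redCstar G : Set (BH G)) := by
  unfold redCstar
  exact StarSubalgebra.isClosed_topologicalClosure _

/-- the joint representation -/
def wj (μ : WD G) (g : G) : BH G × BH (G ⧸ Hm μ) := (Up g, Up g)

def Dj (μ : WD G) : StarSubalgebra ℂ (BH G × BH (G ⧸ Hm μ)) :=
  (StarAlgebra.adjoin ℂ (Set.range (wj μ))).topologicalClosure

theorem Dj_closed (μ : WD G) : IsClosed (Dj μ : Set (BH G × BH (G ⧸ Hm μ))) :=
  StarSubalgebra.isClosed_topologicalClosure _

theorem Dj_gen (μ : WD G) (g : G) : wj μ g ∈ Dj μ :=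
  StarSubalgebra.le_topologicalClosure _ (StarAlgebra.subset_adjoin ℂ _ ⟨g, rfl⟩)

theorem Dj_ind (μ : WD G) (p : BH G × BH (G ⧸ Hm μ) → Prop) (hc : IsClosed {x | p x})
    (hS : ∀ (S : Finset G) (c : G → ℂ), p (∑ g ∈ S, c g • wj μ g))
    (a) (ha : a ∈ Dj μ) : p a := by
  unfold Dj at ha
  rw [← SetLike.mem_coe, StarSubalgebra.topologicalClosure_coe] at ha
  refine closure_minimal (t := {x | p x}) ?_ hc ha
  intro x hx
  have := adjoin_le_span (wj μ) (fun g h => Prod.ext (Up_mul g h) (Up_mul g h))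
    (fun g => Prod.ext (Up_star g) (Up_star g)) (Prod.ext Up_one Up_one) x hx
  obtain ⟨c, rfl⟩ := (Finsupp.mem_span_range_iff_exists_finsupp).1 this
  exact hS c.support c

theorem Dj_norm {μ : WD G} (hμ : IsMean μ) (x) (hx : x ∈ Dj μ) : ‖x.2‖ ≤ ‖x.1‖ := by
  refine Dj_ind μ (fun x => ‖x.2‖ ≤ ‖x.1‖) ?_ ?_ x hx
  · exact isClosed_le (continuous_snd.norm) (continuous_fst.norm)
  · intro S c
    have := weak_cont hμ S c
    rw [Prod.fst_sum, Prod.snd_sum]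
    exact this

theorem Dj_fst (μ : WD G) (x) (hx : x ∈ Dj μ) : x.1 ∈ redCstar G := by
  refine Dj_ind μ (fun x => x.1 ∈ redCstar G) (red_closed.preimage continuous_fst) ?_ x hx
  intro S c
  rw [Prod.fst_sum]
  exact sum_mem fun g _ => (redCstar G).smul_mem (Up_mem_red g) _

theorem Dj_mulL (μ : WD G) (a : BH G) (ha : (a, 0) ∈ Dj μ) (b : BH G) (hb : b ∈ redCstar G) :
    (b * a, 0) ∈ Dj μ := by
  let S : Submodule ℂ (BH G) :=
    { carrier := {b | (b * a, 0) ∈ Dj μ}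
      zero_mem' := by
        show (0 * a, 0) ∈ Dj μ
        rw [zero_mul]; exact zero_mem _
      add_mem' := fun {x y} hx hy => by
        have := add_mem (s := Dj μ) hx hy
        rw [Prod.mk_add_mk, add_zero, ← add_mul] at this
        exact this
      smul_mem' := fun c x hx => by
        have := (Dj μ).smul_mem hx c
        rw [Prod.smul_mk, smul_zero, ← smul_mul_assoc] at this
        exact this }
  refine red_ind S ?_ ?_ b hb
  · exact (Dj_closed μ).preimage (by fun_prop : Continuous fun b : BH G => (b * a, (0 : BH (G ⧸ Hm μ))))
  · intro g
    have := mul_mem (Dj_gen μ g) ha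
    rw [wj, Prod.mk_mul_mk, mul_zero] at this
    exact this

theorem Dj_mulR (μ : WD G) (a : BH G) (ha : (a, 0) ∈ Dj μ) (b : BH G) (hb : b ∈ redCstar G) :
    (a * b, 0) ∈ Dj μ := by
  have h1 : (star a, 0) ∈ Dj μ := by
    have := star_mem ha
    rwa [Prod.star_def, star_zero] at this
  have := star_mem (Dj_mulL μ _ h1 _ (star_mem hb))
  rwa [Prod.star_def, star_zero, star_mul, star_star, star_star] at this

theorem Dj_inj (hG : IsCstarSimple G) {μ : WD G} (hμ : IsMean μ) (a : BH G)
    (ha : (a, 0) ∈ Dj μ) : a = 0 := by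
  let I : TwoSidedIdeal (redCstar G) := TwoSidedIdeal.mk' {x | ((x : BH G), 0) ∈ Dj μ}
    (by
      show ((0 : BH G), (0 : BH (G ⧸ Hm μ))) ∈ Dj μ
      exact zero_mem _)
    (fun {x y} hx hy => by
      have := add_mem (s := Dj μ) hx hy
      rw [Prod.mk_add_mk, add_zero] at this
      exact this)
    (fun {x} hx => by
      have := neg_mem (s := Dj μ) hx
      rw [Prod.neg_mk, neg_zero] at this
      exact this)
    (fun {x y} hy => Dj_mulL μ _ hy _ x.2)
    (fun {x y} hx => Dj_mulR μ _ hx _ y.2)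
  have hI : ∀ x, x ∈ I ↔ ((x : BH G), 0) ∈ Dj μ := fun x => TwoSidedIdeal.mem_mk' ..
  have hc : IsClosed (I : Set (redCstar G)) := by
    have : (I : Set (redCstar G)) = (fun x : redCstar G => ((x : BH G), (0 : BH (G ⧸ Hm μ)))) ⁻¹'
        (Dj μ : Set (BH G × BH (G ⧸ Hm μ))) := by ext x; exact hI x
    rw [this]
    exact (Dj_closed μ).preimage (by fun_prop)
  rcases hG I hc with h | h
  · have : (⟨a, Dj_fst μ _ ha⟩ : redCstar G) ∈ I := (hI _).2 ha
    rw [h, TwoSidedIdeal.mem_bot] at this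
    exact congrArg Subtype.val this
  · exfalso
    have h1 : (1 : redCstar G) ∈ I := by rw [h]; trivial
    have h2 : ((1 : BH G), (0 : BH (G ⧸ Hm μ))) ∈ Dj μ := (hI 1).1 h1
    have h3 := Dj_norm hμ _ (sub_mem (one_mem (Dj μ)) h2)
    have e1 : ((1 : BH G × BH (G ⧸ Hm μ)) - (1, 0)).1 = 0 := sub_self _
    have e2 : ((1 : BH G × BH (G ⧸ Hm μ)) - (1, 0)).2 = 1 := sub_zero _
    rw [e1, e2, norm_zero] at h3
    have h4 : (1 : BH (G ⧸ Hm μ)) = 0 := norm_le_zero_iff.1 h3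
    have h5 := congrArg (fun T : BH (G ⧸ Hm μ) => ‖T (dl ((1 : G) : G ⧸ Hm μ))‖) h4
    simp [dl_norm] at h5

instance instDjClosed (μ : WD G) : IsClosed (Dj μ : Set (BH G × BH (G ⧸ Hm μ))) := Dj_closed μ

theorem Dj_iso (hG : IsCstarSimple G) {μ : WD G} (hμ : IsMean μ) (x) (hx : x ∈ Dj μ) :
    ‖x.1‖ ≤ ‖x.2‖ := by
  letI : CStarAlgebra (Dj μ) := StarSubalgebra.cstarAlgebra (Dj μ)
  let f : Dj μ →⋆ₐ[ℂ] BH (G ⧸ Hm μ) := (StarAlgHom.snd ℂ (BH G) (BH (G ⧸ Hm μ))).comp (Dj μ).subtype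
  have hf : Function.Injective f := by
    rw [injective_iff_map_eq_zero]
    rintro ⟨⟨a, b⟩, hab⟩ h
    have hb : b = 0 := h
    subst hb
    have := Dj_inj hG hμ a hab
    subst this
    rfl
  have := NonUnitalStarAlgHom.norm_map f hf ⟨x, hx⟩
  have e : ‖x‖ = ‖x.2‖ := this.symm
  rw [← e]
  exact norm_fst_le x


theorem isSt_of_contr {B : Type*} [CStarAlgebra B] [PartialOrder B] [StarOrderedRing B]
    (θ : B →ₗ[ℂ] ℂ) (h1 : θ 1 = 1) (hn : ∀ x, ‖θ x‖ ≤ ‖x‖) : IsSt θ := by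
  have him : ∀ T : B, star T = T → (θ T).im = 0 := by
    intro T hT
    have key : ∀ s : ℝ, ((θ T).im + s) ^ 2 ≤ ‖T‖ ^ 2 + s ^ 2 := by
      intro s
      have e1 : θ (T + (Complex.I * s) • 1) = θ T + Complex.I * s := by
        rw [map_add, map_smul, h1, smul_eq_mul, mul_one]
      have e2 : star (T + (Complex.I * s : ℂ) • (1 : B)) * (T + (Complex.I * s : ℂ) • 1)
          = star T * T + ((s ^ 2 : ℝ) : ℂ) • 1 := by
        have hI : star (Complex.I * s : ℂ) = -(Complex.I * s) := by simp
        have hII : (-(Complex.I * s)) * (Complex.I * s) = ((s ^ 2 : ℝ) : ℂ) := by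
          push_cast
          linear_combination (-(s : ℂ) ^ 2) * Complex.I_sq
        rw [star_add, star_smul, star_one, hT, hI, add_mul, mul_add, mul_add, smul_mul_smul_comm,
          hII, mul_smul_comm, smul_mul_assoc, one_mul, mul_one, one_mul, neg_smul]
        abel
      have n1 : ‖T + (Complex.I * s : ℂ) • (1 : B)‖ ^ 2 ≤ ‖T‖ ^ 2 + s ^ 2 * ‖(1 : B)‖ := by
        rw [sq, ← CStarRing.norm_star_mul_self, e2]
        refine (norm_add_le _ _).trans ?_
        rw [CStarRing.norm_star_mul_self, norm_smul, Complex.norm_real, Real.norm_eq_abs,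
          abs_of_nonneg (sq_nonneg s), sq ‖T‖]
      have n2 : ‖(1 : B)‖ ≤ 1 := by
        rcases subsingleton_or_nontrivial B with h | h
        · rw [Subsingleton.elim (1 : B) 0, norm_zero]; exact zero_le_one
        · rw [CStarRing.norm_one]
      have n3 := hn (T + (Complex.I * s : ℂ) • (1 : B))
      rw [e1] at n3
      have n4 := (Complex.abs_im_le_norm _).trans n3
      have n5 : (θ T + Complex.I * s).im = (θ T).im + s := by simp
      rw [n5] at n4
      have n6 := sq_le_sq' (by linarith [neg_abs_le ((θ T).im + s), norm_nonneg (T + (Complex.I * s : ℂ) • (1 : B))]) ((le_abs_self _).trans n4)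
      nlinarith [sq_nonneg s]
    by_contra hne
    have := key ((‖T‖ ^ 2 + 1) / (2 * (θ T).im))
    have e : ((θ T).im + (‖T‖ ^ 2 + 1) / (2 * (θ T).im)) ^ 2
        = (θ T).im ^ 2 + (‖T‖ ^ 2 + 1) + ((‖T‖ ^ 2 + 1) / (2 * (θ T).im)) ^ 2 := by
      field_simp
      ring
    rw [e] at this
    nlinarith [sq_nonneg (θ T).im]
  refine ⟨h1, fun T => ?_⟩
  have hsa : star (star T * T) = star T * T := by rw [star_mul, star_star]
  have hi := him _ hsa
  rw [Complex.nonneg_iff]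
  refine ⟨?_, hi.symm⟩
  set P := star T * T with hP
  have hP0 : 0 ≤ P := star_mul_self_nonneg T
  have hle : P ≤ algebraMap ℝ B ‖P‖ := IsSelfAdjoint.le_algebraMap_norm_self hsa
  have hb : ‖algebraMap ℝ B ‖P‖ - P‖ ≤ ‖P‖ := by
    refine (CStarAlgebra.norm_le_norm_of_nonneg_of_le (b := algebraMap ℝ B ‖P‖)
      (sub_nonneg.2 hle) (sub_le_self _ hP0)).trans ?_
    rcases subsingleton_or_nontrivial B with h | h
    · rw [Subsingleton.elim (algebraMap ℝ B ‖P‖) 0, norm_zero]; exact norm_nonneg _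
    · rw [norm_algebraMap', Real.norm_eq_abs, abs_norm]
  have e : θ (algebraMap ℝ B ‖P‖ - P) = (‖P‖ : ℂ) - θ P := by
    rw [map_sub, Algebra.algebraMap_eq_smul_one]
    congr 1
    have : (‖P‖ • (1 : B)) = (‖P‖ : ℂ) • (1 : B) := by rw [Complex.coe_smul]
    rw [this, map_smul, h1]; simp
  have h2 := (Complex.re_le_norm _).trans ((hn _).trans hb)
  rw [e, Complex.sub_re, Complex.ofReal_re] at h2
  linarith

theorem exists_theta (hG : IsCstarSimple G) {μ : WD G} (hμ : IsMean μ) :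
    ∃ θ : BH (G ⧸ Hm μ) →ₗ[ℂ] ℂ, IsSt θ ∧ ∀ t : G, t ≠ 1 → θ (Up t) = 0 := by
  let f : (Dj μ).toSubalgebra.toSubmodule →ₗ[ℂ] BH (G ⧸ Hm μ) :=
    (LinearMap.snd ℂ (BH G) (BH (G ⧸ Hm μ))).comp (Submodule.subtype _)
  have hf : Function.Injective f := by
    rw [injective_iff_map_eq_zero]
    rintro ⟨⟨a, b⟩, hab⟩ h
    have hb : b = 0 := h
    subst hb
    have := Dj_inj hG hμ a hab
    subst this
    rfl
  let E := LinearEquiv.ofInjective f hf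
  let e0 : BH G →ₗ[ℂ] ℂ :=
    { toFun := fun a => inner ℂ (dl (1 : G)) (a (dl 1))
      map_add' := fun a b => by simp [inner_add_right]
      map_smul' := fun c a => by simp [inner_smul_right] }
  let q : LinearMap.range f →ₗ[ℂ] ℂ :=
    e0.comp ((LinearMap.fst ℂ (BH G) (BH (G ⧸ Hm μ))).comp ((Submodule.subtype _).comp
      E.symm.toLinearMap))
  have hq : ∀ (x) (hx : x ∈ Dj μ), q ⟨x.2, ⟨⟨x, hx⟩, rfl⟩⟩ = e0 x.1 := by
    intro x hx
    have : E.symm ⟨x.2, ⟨⟨x, hx⟩, rfl⟩⟩ = ⟨x, hx⟩ := by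
      rw [LinearEquiv.symm_apply_eq]; rfl
    show e0 (E.symm ⟨x.2, ⟨⟨x, hx⟩, rfl⟩⟩ : BH G × BH (G ⧸ Hm μ)).1 = _
    rw [this]
  have hqn : ∀ y, ‖q y‖ ≤ 1 * ‖y‖ := by
    rintro ⟨_, ⟨⟨x, hx⟩, rfl⟩⟩
    have h1 : q ⟨f ⟨x, hx⟩, ⟨⟨x, hx⟩, rfl⟩⟩ = e0 x.1 := hq x hx
    rw [h1, one_mul]
    show ‖inner ℂ (dl (1 : G)) (x.1 (dl 1))‖ ≤ ‖x.2‖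
    refine (norm_inner_le_norm _ _).trans ?_
    rw [dl_norm, one_mul]
    refine (x.1.le_opNorm _).trans ?_
    rw [dl_norm, mul_one]
    exact Dj_iso hG hμ x hx
  obtain ⟨θ, hθ1, hθ2⟩ := exists_extension_norm_eq (𝕜 := ℂ) (LinearMap.range f) (q.mkContinuous 1 hqn)
  have hgen : ∀ g : G, θ (Up g) = inner ℂ (dl (1 : G)) (dl g) := by
    intro g
    have h1 := hθ1 ⟨(wj μ g).2, ⟨⟨wj μ g, Dj_gen μ g⟩, rfl⟩⟩
    have h2 := hq (wj μ g) (Dj_gen μ g)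
    have h3 : e0 (wj μ g).1 = inner ℂ (dl (1 : G)) (dl g) := by
      show inner ℂ (dl (1 : G)) ((Up g : BH G) (dl 1)) = _
      rw [Up_dl, smul_eq_mul, mul_one]
    rw [← h3, ← h2]
    exact h1
  refine ⟨θ.toLinearMap, isSt_of_contr _ ?_ ?_, ?_⟩
  · have := hgen 1
    rw [Up_one] at this
    refine this.trans ?_
    rw [inner_self_eq_norm_sq_to_K, dl_norm]; simp
  · intro x
    have h1 : ‖θ‖ ≤ 1 := by rw [hθ2]; exact LinearMap.mkContinuous_norm_le _ zero_le_one _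
    have := θ.le_of_opNorm_le h1 x
    rwa [one_mul] at this
  · intro t ht
    refine (hgen t).trans ?_
    rw [lp.inner_eq_tsum]
    convert tsum_zero with k
    rw [dl_apply, dl_apply]
    by_cases h : k = 1
    · subst h; simp [ht.symm]
    · simp [h]

/-- the canonical trace as a linear functional on `BH G` -/
def tr (G : Type u) [Group G] : BH G →ₗ[ℂ] ℂ where
  toFun := fun a => inner ℂ (dl (1 : G)) (a (dl 1))
  map_add' := fun a b => by simp [inner_add_right]
  map_smul' := fun c a => by simp [inner_smul_right]

theorem tr_norm (a : BH G) : ‖tr G a‖ ≤ ‖a‖ := by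
  show ‖inner ℂ (dl (1 : G)) (a (dl 1))‖ ≤ ‖a‖
  refine (norm_inner_le_norm _ _).trans ?_
  rw [dl_norm, one_mul]
  refine (a.le_opNorm _).trans ?_
  rw [dl_norm, mul_one]

theorem tr_Up (g : G) (hg : g ≠ 1) : tr G (Up g) = 0 := by
  show inner ℂ (dl (1 : G)) ((Up g : BH G) (dl 1)) = 0
  rw [Up_dl, smul_eq_mul, mul_one, lp.inner_eq_tsum]
  convert tsum_zero with k
  rw [dl_apply, dl_apply]
  by_cases h : k = 1
  · subst h; simp [hg.symm]
  · simp [h]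

theorem tr_one : tr G 1 = 1 := by
  show inner ℂ (dl (1 : G)) (dl 1) = 1
  rw [inner_self_eq_norm_sq_to_K, dl_norm]; simp

theorem tr_continuous : Continuous (tr G) :=
  AddMonoidHomClass.continuous_of_bound (tr G) 1 (fun x => by rw [one_mul]; exact tr_norm x)

theorem tauF_eq (a : redCstar G) : tauF G a = tr G (a : BH G) := by
  unfold tauF deltaOne
  rfl

theorem avS_eq_tr (hG : IsCstarSimple G) {μ : WD G} (hμ : BM μ) {φ : BH G →ₗ[ℂ] ℂ} (h : IsSt φ)
    (a : BH G) (ha : a ∈ redCstar G) : avS μ h a = tr G a := by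
  obtain ⟨θ, hθ, hθ0⟩ := exists_theta hG hμ.mean
  have hst := isSt_avS hμ.mean h
  have hcont : Continuous (avS μ h) :=
    AddMonoidHomClass.continuous_of_bound (avS μ h) 1
      (fun x => by rw [one_mul]; exact hst.norm_le x)
  refine red_ind (LinearMap.eqLocus (avS μ h) (tr G)) ?_ ?_ a ha
  · exact isClosed_eq hcont tr_continuous
  · intro g
    rw [LinearMap.mem_eqLocus]
    by_cases hg : g = 1
    · subst hg
      rw [Up_one, hst.1, tr_one]
    · rw [stepII hμ h hθ hθ0 hg, tr_Up g hg]


/-! ### From states to Powers averaging -/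

section Averages

open Filter Topology

variable {ι κ : Type u} [Fintype ι] [Fintype κ]

/-- conjugation -/
def cj (g : G) : BH G →ₗ[ℂ] BH G where
  toFun := fun b => (Up g : BH G) * b * Up g⁻¹
  map_add' := fun a b => by rw [mul_add, add_mul]
  map_smul' := fun c a => by simp

theorem cj_apply (g : G) (b : BH G) : cj g b = (Up g : BH G) * b * Up g⁻¹ := rfl

theorem cj_cj (g h : G) (b : BH G) : cj g (cj h b) = cj (g * h) b := by
  simp only [cj_apply]
  rw [mul_inv_rev, ← Up_mul, ← Up_mul]
  noncomm_ring

theorem cj_star (g : G) (b : BH G) : star (cj g b) = cj g (star b) := by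
  simp only [cj_apply, star_mul, Up_star, inv_inv, mul_assoc]

theorem cj_one (g : G) : cj g 1 = (1 : BH G) := by
  rw [cj_apply, mul_one, Up_mul_inv]

theorem cj_norm (g : G) (b : BH G) : ‖cj g b‖ ≤ ‖b‖ := by
  have := Up_conj_norm_le g⁻¹ b
  rwa [inv_inv] at this

theorem cj_mono (g : G) {a b : BH G} (h : a ≤ b) : cj g a ≤ cj g b := by
  have := star_right_conjugate_le_conjugate h (Up g : BH G)
  rwa [Up_star] at this

theorem cj_mem (g : G) {a : BH G} (h : a ∈ redCstar G) : cj g a ∈ redCstar G :=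
  mul_mem (mul_mem (Up_mem_red _) h) (Up_mem_red _)

theorem cj_tr (g : G) {a : BH G} (h : a ∈ redCstar G) : tr G (cj g a) = tr G a := by
  have hc : Continuous (cj g : BH G → BH G) :=
    AddMonoidHomClass.continuous_of_bound (cj g) 1 (fun x => by rw [one_mul]; exact cj_norm g x)
  refine red_ind (LinearMap.eqLocus ((tr G).comp (cj g)) (tr G)) ?_ ?_ a h
  · exact isClosed_eq (tr_continuous.comp hc) tr_continuous
  · intro t
    rw [LinearMap.mem_eqLocus, LinearMap.comp_apply]
    by_cases ht : t = 1
    · subst ht; rw [Up_one, cj_one]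
    · rw [cj_apply, Up_mul, Up_mul, tr_Up t ht, tr_Up]
      intro h
      apply ht
      exact conj_eq_one_iff.1 h

theorem tr_star (a : BH G) : tr G (star a) = (starRingEnd ℂ) (tr G a) := by
  show inner ℂ (dl (1 : G)) (star a (dl 1)) = (starRingEnd ℂ) (inner ℂ (dl (1 : G)) (a (dl 1)))
  rw [ContinuousLinearMap.star_eq_adjoint, ContinuousLinearMap.adjoint_inner_right, inner_conj_symm]

/-- uniform averages -/
def Avg (g : ι → G) : BH G →ₗ[ℂ] BH G := ((Fintype.card ι : ℂ)⁻¹) • ∑ i, cj (g i)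

theorem Avg_apply (g : ι → G) (b : BH G) :
    Avg g b = ((Fintype.card ι : ℂ)⁻¹) • ∑ i, cj (g i) b := by
  simp [Avg, LinearMap.sum_apply]

theorem Avg_Avg (g : ι → G) (h : κ → G) (b : BH G) :
    Avg g (Avg h b) = Avg (fun p : ι × κ => g p.1 * h p.2) b := by
  simp only [Avg_apply, map_smul, map_sum, cj_cj, Fintype.card_prod, Fintype.sum_prod_type,
    ← Finset.smul_sum, smul_smul]
  push_cast
  rw [mul_inv, Finset.sum_comm, mul_comm]

theorem Avg_star (g : ι → G) (b : BH G) : star (Avg g b) = Avg g (star b) := by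
  simp only [Avg_apply, star_smul, star_sum, cj_star]
  simp

theorem Avg_one [Nonempty ι] (g : ι → G) : Avg g 1 = (1 : BH G) := by
  have : (Fintype.card ι : ℂ) ≠ 0 := by simp
  simp only [Avg_apply, cj_one, Finset.sum_const, Finset.card_univ]
  rw [← Nat.cast_smul_eq_nsmul ℂ, smul_smul, inv_mul_cancel₀ this, one_smul]

theorem Avg_norm [Nonempty ι] (g : ι → G) (b : BH G) : ‖Avg g b‖ ≤ ‖b‖ := by
  have hne : (Fintype.card ι : ℝ) ≠ 0 := by simp
  rw [Avg_apply, norm_smul, norm_inv, Complex.norm_natCast]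
  calc _ ≤ (Fintype.card ι : ℝ)⁻¹ * ∑ i : ι, ‖b‖ := by
        gcongr
        exact (norm_sum_le _ _).trans (Finset.sum_le_sum fun i _ => cj_norm _ _)
    _ = ‖b‖ := by
        rw [Finset.sum_const, Finset.card_univ, nsmul_eq_mul, ← mul_assoc, inv_mul_cancel₀ hne, one_mul]

theorem Avg_mem (g : ι → G) {a : BH G} (h : a ∈ redCstar G) : Avg g a ∈ redCstar G := by
  rw [Avg_apply]
  exact (redCstar G).smul_mem (sum_mem fun i _ => cj_mem _ h) _

theorem Avg_tr [Nonempty ι] (g : ι → G) {a : BH G} (h : a ∈ redCstar G) :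
    tr G (Avg g a) = tr G a := by
  have hne : (Fintype.card ι : ℂ) ≠ 0 := by simp
  rw [Avg_apply, map_smul, map_sum, Finset.sum_congr rfl (fun i _ => cj_tr (g i) h)]
  rw [Finset.sum_const, Finset.card_univ, nsmul_eq_mul, smul_eq_mul, ← mul_assoc, inv_mul_cancel₀ hne, one_mul]

theorem Avg_mono (g : ι → G) {a b : BH G} (h : a ≤ b) : Avg g a ≤ Avg g b := by
  rw [Avg_apply, Avg_apply]
  refine smul_le_smul_of_nonneg_left (Finset.sum_le_sum fun i _ => cj_mono _ h) ?_
  rw [inv_nonneg]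
  exact Nat.cast_nonneg _

/-- density of uniform averages in the convex hull -/
theorem hull_avg (a y : BH G) (hy : y ∈ convexHull ℝ (Set.range fun g : G => cj g a))
    (s : Set (BH G)) (hs : IsOpen s) (hys : y ∈ s) :
    ∃ (κ : Type u) (_ : Fintype κ) (_ : Nonempty κ) (g : κ → G), Avg g a ∈ s := by
  obtain ⟨ι, _, w, z, hw0, hw1, hz, rfl⟩ := mem_convexHull_iff_exists_fintype.1 hy
  choose g hg using hz
  have h1 : ∀ i, Tendsto (fun x : ℝ => (⌈w i * x⌉₊ : ℝ) / x) atTop (𝓝 (w i)) := fun i =>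
    tendsto_nat_ceil_mul_div_atTop (hw0 i)
  have h2 : Tendsto (fun x : ℝ => ∑ i, ((⌈w i * x⌉₊ : ℝ) / x)) atTop (𝓝 1) := by
    rw [← hw1]
    exact tendsto_finsetSum _ fun i _ => h1 i
  have h3 : Tendsto (fun x : ℝ => ∑ i, ((⌈w i * x⌉₊ : ℝ) / x) • z i) atTop (𝓝 (∑ i, w i • z i)) :=
    tendsto_finsetSum _ fun i _ => (h1 i).smul_const (z i)
  have h4 : Tendsto (fun x : ℝ => (∑ i, ((⌈w i * x⌉₊ : ℝ) / x))⁻¹ • ∑ i, ((⌈w i * x⌉₊ : ℝ) / x) • z i)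
      atTop (𝓝 (∑ i, w i • z i)) := by
    have := (h2.inv₀ one_ne_zero).smul h3
    rwa [inv_one, one_smul] at this
  obtain ⟨x, hx1, hx2, hx3⟩ := ((h4.eventually (hs.mem_nhds hys)).and
    ((eventually_gt_atTop (0 : ℝ)).and (h2.eventually (lt_mem_nhds (zero_lt_one' ℝ))))).exists
  let κ := ULift.{u} (Σ i, Fin ⌈w i * x⌉₊)
  have hsum : ∀ {M : Type u} [AddCommGroup M] [Module ℝ M] (F : ι → M),
      ∑ k : κ, F k.down.1 = ∑ i, (⌈w i * x⌉₊ : ℝ) • F i := by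
    intro M _ _ F
    rw [← Equiv.ulift.symm.sum_comp, Fintype.sum_sigma]
    refine Finset.sum_congr rfl fun i _ => ?_
    simp [Nat.cast_smul_eq_nsmul]
  have hcard : (Fintype.card κ : ℝ) = ∑ i, (⌈w i * x⌉₊ : ℝ) := by
    simp [κ]
  have hne : (0 : ℝ) < Fintype.card κ := by
    rw [hcard]
    rw [← Finset.sum_div] at hx3
    exact (div_pos_iff_of_pos_right hx2).1 hx3
  refine ⟨κ, inferInstance, Fintype.card_pos_iff.1 (by exact_mod_cast hne), fun k => g k.down.1, ?_⟩
  convert hx1 using 1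
  rw [Avg_apply]
  have e1 : ∑ k : κ, cj (g k.down.1) a = ∑ i, (⌈w i * x⌉₊ : ℝ) • z i := by
    rw [hsum (fun i => cj (g i) a)]
    exact Finset.sum_congr rfl fun i _ => by rw [← hg i]
  have e2 : (((Fintype.card κ : ℕ) : ℂ)⁻¹) = (((Fintype.card κ : ℝ)⁻¹ : ℝ) : ℂ) := by push_cast; rfl
  rw [e1, e2, Complex.coe_smul, ← Finset.sum_div]
  simp only [div_eq_inv_mul, mul_smul, ← Finset.smul_sum]
  rw [smul_smul, hcard]
  rw [mul_inv, inv_inv, mul_comm x, mul_assoc, mul_inv_cancel₀ hx2.ne', mul_one]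
  exact Iff.rfl

end Averages


section Powers

open Pointwise

section Abstract

variable {B : Type*} [CStarAlgebra B] [PartialOrder B] [StarOrderedRing B]

/-- elements with nonpositive real part -/
def Kc (B : Type*) [CStarAlgebra B] [PartialOrder B] [StarOrderedRing B] : Set B :=
  {b | b + star b ≤ 0}

theorem Kc_smul {b : B} (hb : b ∈ Kc B) {r : ℝ} (hr : 0 ≤ r) : r • b ∈ Kc B := by
  have h : b + star b ≤ 0 := hb
  show r • b + star (r • b) ≤ 0
  rw [star_smul, star_trivial, ← smul_add]
  have := smul_le_smul_of_nonneg_left h hr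
  rwa [smul_zero] at this

theorem Kc_add {b c : B} (hb : b ∈ Kc B) (hc : c ∈ Kc B) : b + c ∈ Kc B := by
  have h : b + star b ≤ 0 := hb
  have h' : c + star c ≤ 0 := hc
  show b + c + star (b + c) ≤ 0
  rw [star_add, add_add_add_comm]
  exact add_nonpos h h'

theorem Kc_convex : Convex ℝ (Kc B) := by
  intro x hx y hy p q hp hq _
  exact Kc_add (Kc_smul hx hp) (Kc_smul hy hq)

/-- open neighbourhood of the elements with nonpositive real part -/
def Kn (B : Type*) [CStarAlgebra B] [PartialOrder B] [StarOrderedRing B] (ε : ℝ) : Set B :=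
  Metric.ball 0 ε + Kc B

theorem Kn_open (ε : ℝ) : IsOpen (Kn B ε) := Metric.isOpen_ball.add_right

theorem sep_state (t : Set B) (ht : Convex ℝ t) (a : B) (hat : a ∈ t) (hsa : star a = a)
    (ε : ℝ) (hε : 0 < ε) (hd : Disjoint (Kn B ε) t) :
    ∃ φ : B →ₗ[ℂ] ℂ, IsSt φ ∧ ∃ u > 0, ∀ y ∈ t, u ≤ (φ y).re := by
  have hsc : Convex ℝ (Kn B ε) := (convex_ball 0 ε).add Kc_convex
  have hK0 : (0 : B) ∈ Kc B := by
    show (0 : B) + star 0 ≤ 0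
    simp
  have hKs : ∀ k ∈ Kc B, k ∈ Kn B ε := fun k hk => by
    have := Set.add_mem_add (Metric.mem_ball_self (x := (0 : B)) hε) hk
    rwa [zero_add] at this
  obtain ⟨f, u, hf1, hf2⟩ := geometric_hahn_banach_open hsc (Kn_open ε) ht hd
  have hu : 0 < u := by
    have := hf1 0 (hKs 0 hK0)
    rwa [map_zero] at this
  have hK : ∀ k ∈ Kc B, f k ≤ 0 := by
    intro k hk
    by_contra! hpos
    have := hf1 _ (hKs _ (Kc_smul hk (r := u / f k) (by positivity)))
    rw [map_smul, smul_eq_mul, div_mul_cancel₀ _ hpos.ne'] at this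
    exact lt_irrefl _ this
  have hP : ∀ T : B, 0 ≤ f (star T * T) := by
    intro T
    have : -(star T * T) ∈ Kc B := by
      show -(star T * T) + star (-(star T * T)) ≤ 0
      rw [star_neg, star_mul, star_star]
      have := star_mul_self_nonneg T
      exact add_nonpos (neg_nonpos.2 this) (neg_nonpos.2 this)
    have := hK _ this
    rw [map_neg] at this
    linarith
  have hI : ∀ T : B, f (Complex.I • (star T * T)) = 0 := by
    intro T
    have e : star (Complex.I • (star T * T)) = -(Complex.I • (star T * T)) := by
      rw [star_smul, star_mul, star_star, RCLike.star_def, Complex.conj_I, neg_smul]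
    have k1 : Complex.I • (star T * T) ∈ Kc B := by
      show _ + star _ ≤ (0 : B)
      rw [e, add_neg_cancel]
    have k2 : -(Complex.I • (star T * T)) ∈ Kc B := by
      show _ + star _ ≤ (0 : B)
      rw [star_neg, e, add_neg_cancel]
    have l1 := hK _ k1
    have l2 := hK _ k2
    rw [map_neg] at l2
    linarith
  have hf1pos : 0 < f 1 := by
    have hk : a - algebraMap ℝ (B) ‖a‖ ∈ Kc B := by
      have hle : a ≤ algebraMap ℝ (B) ‖a‖ := IsSelfAdjoint.le_algebraMap_norm_self hsa
      show _ + star _ ≤ (0 : B)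
      have e : star (a - algebraMap ℝ (B) ‖a‖) = a - algebraMap ℝ (B) ‖a‖ := by
        rw [star_sub, hsa, Algebra.algebraMap_eq_smul_one, star_smul, star_trivial, star_one]
      rw [e]
      exact add_nonpos (sub_nonpos.2 hle) (sub_nonpos.2 hle)
    have h1 := hK _ hk
    rw [Algebra.algebraMap_eq_smul_one, map_sub, map_smul, smul_eq_mul] at h1
    have h2 := hf2 a hat
    by_contra! hneg
    nlinarith [norm_nonneg a]
  let r : B →ₗ[ℝ] ℝ := (f 1)⁻¹ • f.toLinearMap
  have hr : ∀ b, r b = (f 1)⁻¹ * f b := fun b => rfl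
  have hst := isSt_extend r (by rw [hr, inv_mul_cancel₀ hf1pos.ne'])
    (fun T => by rw [hr]; exact mul_nonneg (inv_nonneg.2 hf1pos.le) (hP T))
    (fun T => by rw [hr, hI, mul_zero])
  refine ⟨_, hst, (f 1)⁻¹ * u, mul_pos (inv_pos.2 hf1pos) hu, fun y hy => ?_⟩
  rw [extend_re, hr]
  exact mul_le_mul_of_nonneg_left (hf2 y hy) (inv_nonneg.2 hf1pos.le)

theorem alg_eq (ε : ℝ) : algebraMap ℝ B ε = (ε : ℂ) • 1 := by
  rw [Algebra.algebraMap_eq_smul_one, Complex.coe_smul]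

theorem Kn_le {b : B} (hb : star b = b) {ε : ℝ} (hg : b ∈ Kn B ε) : b ≤ (ε : ℂ) • 1 := by
  rw [← alg_eq]
  obtain ⟨x, hx, k, hk, hxk⟩ := Set.mem_add.1 hg
  have hx' : ‖x‖ < ε := by simpa using hx
  have hk' : k + star k ≤ 0 := hk
  have e : b + b = (x + star x) + (k + star k) := by
    nth_rewrite 2 [← hb]
    rw [← hxk, star_add]; abel
  have hxs : x + star x ≤ algebraMap ℝ (B) (ε + ε) := by
    have hs : star (x + star x) = x + star x := by rw [star_add, star_star, add_comm]
    refine (IsSelfAdjoint.le_algebraMap_norm_self hs).trans ?_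
    refine algebraMap_mono _ ?_
    refine (norm_add_le _ _).trans ?_
    rw [norm_star]; linarith
  have h2 : b + b ≤ algebraMap ℝ (B) (ε + ε) := by
    rw [e]
    have := add_le_add hxs hk'
    rwa [add_zero] at this
  have h3 := smul_le_smul_of_nonneg_left h2 (by norm_num : (0 : ℝ) ≤ 1 / 2)
  have e1 : (1 / 2 : ℝ) • (b + b) = b := by
    rw [← two_smul ℝ b, smul_smul]; norm_num
  have e2 : (1 / 2 : ℝ) • algebraMap ℝ (B) (ε + ε) = algebraMap ℝ (B) ε := by
    rw [Algebra.algebraMap_eq_smul_one, Algebra.algebraMap_eq_smul_one, smul_smul]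
    congr 1; ring
  rwa [e1, e2] at h3

theorem norm_of_bounds {b : B} {ε : ℝ} (hε : 0 < ε) (h1 : b ≤ (ε : ℂ) • 1)
    (hg' : -b ≤ (ε : ℂ) • 1) : ‖b‖ ≤ 3 * ε := by
  rw [← alg_eq] at h1 hg'
  have h2 : 0 ≤ b + algebraMap ℝ B ε := by
    have := add_le_add_right hg' b
    rwa [add_neg_cancel] at this
  have h3 : b + algebraMap ℝ B ε ≤ algebraMap ℝ B (2 * ε) := by
    rw [two_mul, map_add]
    exact add_le_add h1 le_rfl
  have h4 := (CStarAlgebra.norm_le_iff_le_algebraMap _ (by linarith : (0 : ℝ) ≤ 2 * ε) h2).2 h3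
  have h5 : ‖algebraMap ℝ B ε‖ ≤ ε := by
    rw [Algebra.algebraMap_eq_smul_one, norm_smul, Real.norm_eq_abs, abs_of_pos hε]
    have : ‖(1 : B)‖ ≤ 1 := by
      rcases subsingleton_or_nontrivial B with h | h
      · rw [Subsingleton.elim (1 : B) 0, norm_zero]; exact zero_le_one
      · rw [CStarRing.norm_one]
    nlinarith
  calc ‖b‖ = ‖(b + algebraMap ℝ B ε) - algebraMap ℝ B ε‖ := by rw [add_sub_cancel_right]
    _ ≤ 2 * ε + ε := (norm_sub_le _ _).trans (add_le_add h4 h5)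
    _ = 3 * ε := by ring

end Abstract

theorem one_sided (hG : IsCstarSimple G) (a : BH G) (ha : a ∈ redCstar G) (hsa : star a = a)
    (h0 : tr G a = 0) (ε : ℝ) (hε : 0 < ε) :
    ∃ (κ : Type u) (_ : Fintype κ) (_ : Nonempty κ) (g : κ → G), Avg g a ≤ (ε : ℂ) • 1 := by
  obtain ⟨μ, hm1, hm2, hm3⟩ := exists_boundary_mean G
  have hμ : BM μ := ⟨hm1, hm2, hm3⟩
  have hamem : a ∈ convexHull ℝ (Set.range fun g : G => cj g a) :=
    subset_convexHull ℝ _ ⟨1, by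
        show cj 1 a = a
        rw [cj_apply, inv_one, Up_one, one_mul, mul_one]⟩
  have main : ¬ Disjoint (Kn (BH G) ε) (convexHull ℝ (Set.range fun g : G => cj g a)) := by
    intro hd
    obtain ⟨φ, hst, u, hu, hφ⟩ := sep_state (B := BH G) _
      (convex_convexHull ℝ (Set.range fun g : G => cj g a)) a hamem hsa ε hε hd
    have h1 := avS_eq_tr hG hμ hst a ha
    have h2 := avS_re μ hst a
    rw [h1, h0, Complex.zero_re] at h2
    have h3 : μ (u • (1 : LI G)) ≤ μ (avR G hst a) := by
      refine hμ.mean.mono fun g => ?_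
      rw [avR_apply]
      have : u ≤ (φ (cj g⁻¹ a)).re := hφ _ (subset_convexHull ℝ _ ⟨g⁻¹, rfl⟩)
      rw [cj_apply, inv_inv] at this
      rw [LI.smul_apply, LI.one_apply, mul_one]
      exact this
    rw [map_smul, hμ.mean.1, smul_eq_mul, mul_one, ← h2] at h3
    linarith
  obtain ⟨y, hy1, hy2⟩ := Set.not_disjoint_iff.1 main
  obtain ⟨κ, i1, i2, g, hg⟩ := hull_avg a y hy2 _ (Kn_open ε) hy1
  exact ⟨κ, i1, i2, g, Kn_le (by rw [Avg_star, hsa]) hg⟩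

theorem two_sided (hG : IsCstarSimple G) (a : BH G) (ha : a ∈ redCstar G) (hsa : star a = a)
    (h0 : tr G a = 0) (ε : ℝ) (hε : 0 < ε) :
    ∃ (κ : Type u) (_ : Fintype κ) (_ : Nonempty κ) (g : κ → G), ‖Avg g a‖ ≤ 3 * ε := by
  obtain ⟨κ, i1, i2, g, hg⟩ := one_sided hG a ha hsa h0 ε hε
  obtain ⟨κ', i1', i2', g', hg'⟩ := one_sided hG (-Avg g a) (neg_mem (Avg_mem g ha))
    (by rw [star_neg, Avg_star, hsa]) (by rw [map_neg, Avg_tr g ha, h0, neg_zero]) ε hε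
  refine ⟨κ' × κ, inferInstance, inferInstance, fun p => g' p.1 * g p.2, ?_⟩
  rw [← Avg_Avg]
  have h1 := Avg_mono g' hg
  rw [map_smul, Avg_one] at h1
  rw [map_neg] at hg'
  exact norm_of_bounds hε h1 hg'

theorem powers_BH (hG : IsCstarSimple G) (a : BH G) (ha : a ∈ redCstar G) (ε : ℝ) (hε : 0 < ε) :
    ∃ (κ : Type u) (_ : Fintype κ) (_ : Nonempty κ) (g : κ → G),
      ‖Avg g a - tr G a • 1‖ < ε := by
  set c := a - tr G a • 1 with hc
  have hcm : c ∈ redCstar G := sub_mem ha ((redCstar G).smul_mem (one_mem _) _)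
  have hct : tr G c = 0 := by
    rw [hc, map_sub, map_smul, tr_one, smul_eq_mul, mul_one, sub_self]
  have hcs : tr G (star c) = 0 := by rw [tr_star, hct, map_zero]
  set X := c + star c with hX
  set Y := Complex.I • (c - star c) with hY
  have hXm : X ∈ redCstar G := add_mem hcm (star_mem hcm)
  have hYm : Y ∈ redCstar G := (redCstar G).smul_mem (sub_mem hcm (star_mem hcm)) _
  obtain ⟨κ, i1, i2, g, hg⟩ := two_sided hG X hXm (by rw [hX, star_add, star_star, add_comm])
    (by rw [hX, map_add, hct, hcs, add_zero]) (ε / 6) (by positivity)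
  have hYs : star Y = Y := by
    rw [hY, star_smul, star_sub, star_star, RCLike.star_def, Complex.conj_I, neg_smul, ← smul_neg,
      neg_sub]
  obtain ⟨κ', i1', i2', g', hg'⟩ := two_sided hG (Avg g Y) (Avg_mem g hYm)
    (by rw [Avg_star, hYs])
    (by rw [Avg_tr g hYm, hY, map_smul, map_sub, hct, hcs, sub_zero, smul_zero]) (ε / 6) (by positivity)
  refine ⟨κ' × κ, inferInstance, inferInstance, fun p => g' p.1 * g p.2, ?_⟩
  have e0 : Avg (fun p : κ' × κ => g' p.1 * g p.2) a - tr G a • 1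
      = Avg (fun p : κ' × κ => g' p.1 * g p.2) c := by
    rw [hc, map_sub, map_smul, Avg_one]
  have e1 : c = (1 / 2 : ℂ) • (X - Complex.I • Y) := by
    rw [hX, hY, smul_smul, Complex.I_mul_I, neg_one_smul]
    have : c + star c - -(c - star c) = (2 : ℂ) • c := by rw [two_smul]; abel
    rw [this, smul_smul]; norm_num
  rw [e0, ← Avg_Avg, e1]
  simp only [map_smul, map_sub]
  have h1 := (Avg_norm g' (Avg g X)).trans hg
  calc _ = 1 / 2 * ‖Avg g' (Avg g X) - Complex.I • Avg g' (Avg g Y)‖ := by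
        rw [norm_smul]; norm_num
    _ ≤ 1 / 2 * (3 * (ε / 6) + 3 * (ε / 6)) := by
        gcongr
        refine (norm_sub_le _ _).trans (add_le_add h1 ?_)
        rw [norm_smul, Complex.norm_I, one_mul]
        exact hg'
    _ < ε := by linarith

theorem uu_coe (g : G) : ((uu g : redCstar G) : BH G) = Up g := by
  unfold uu
  exact lreg_eq g

theorem avg_coe {n : ℕ} (g : Fin n → G) (a : redCstar G) :
    (((n : ℂ)⁻¹ • (∑ i : Fin n, uu (g i) * a * uu (g i)⁻¹) : redCstar G) : BH G)
      = (n : ℂ)⁻¹ • ∑ i, cj (g i) (a : BH G) := by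
  have : ((∑ i : Fin n, uu (g i) * a * uu (g i)⁻¹ : redCstar G) : BH G)
      = ∑ i, cj (g i) (a : BH G) := by
    rw [AddSubmonoidClass.coe_finsetSum]
    refine Finset.sum_congr rfl fun i _ => ?_
    rw [cj_apply, ← uu_coe, ← uu_coe]; rfl
  rw [← this]; rfl

theorem powers_of_simple (hG : IsCstarSimple G) : HasPowersAveraging G := by
  intro a ε hε
  obtain ⟨κ, i1, i2, g, hg⟩ := powers_BH hG a a.2 ε hε
  refine ⟨Fintype.card κ, Fintype.card_pos, g ∘ (Fintype.equivFin κ).symm, ?_⟩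
  rw [tauF_eq]
  show ‖((((Fintype.card κ : ℕ) : ℂ)⁻¹ • (∑ i, uu ((g ∘ (Fintype.equivFin κ).symm) i) * a *
    uu ((g ∘ (Fintype.equivFin κ).symm) i)⁻¹) : redCstar G) : BH G) - tr G a • 1‖ < ε
  rw [avg_coe]
  rw [Avg_apply] at hg
  convert hg using 4
  exact (Fintype.equivFin κ).symm.sum_comp (fun k => cj (g k) (a : BH G))

end Powers

/-! ### The converse -/

theorem tr_faithful (a : BH G) (ha : a ∈ redCstar G) (h : tr G (star a * a) = 0) : a = 0 := by
  have hmem : star a * a ∈ redCstar G := mul_mem (star_mem ha) ha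
  have key : ∀ g : G, a (dl g) = 0 := by
    intro g
    have h1 := cj_tr g⁻¹ hmem
    rw [h] at h1
    have h2 : tr G (cj g⁻¹ (star a * a)) = inner ℂ (a (dl g)) (a (dl g)) := by
      show inner ℂ (dl (1 : G)) ((Up g⁻¹ : BH G) (star a (a ((Up g⁻¹⁻¹ : BH G) (dl 1))))) = _
      rw [← Up_star, Up_dl, inv_inv, smul_eq_mul, mul_one, ContinuousLinearMap.star_eq_adjoint,
        ContinuousLinearMap.star_eq_adjoint, ContinuousLinearMap.adjoint_inner_right,
        ContinuousLinearMap.adjoint_inner_right, Up_dl, smul_eq_mul, mul_one]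
    rw [h2] at h1
    exact inner_self_eq_zero.1 h1
  ext1 f
  have h3 := (hasSum_dl f).mapL a
  simp only [map_smul, key, smul_zero] at h3
  exact h3.unique hasSum_zero

theorem simple_of_powers (hP : HasPowersAveraging G) : IsCstarSimple G := by
  intro I hc
  by_cases hbot : I = ⊥
  · exact Or.inl hbot
  right
  have : ∃ a ∈ I, a ≠ 0 := by
    by_contra! hcon
    apply hbot
    rw [eq_bot_iff]
    intro x hx
    rw [TwoSidedIdeal.mem_bot]
    exact hcon x hx
  obtain ⟨a, haI, ha0⟩ := this
  set b := star a * a with hb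
  have hbI : b ∈ I := I.mul_mem_left _ _ haI
  have hτ : tauF G b ≠ 0 := by
    rw [tauF_eq]
    intro h
    exact ha0 (Subtype.ext (tr_faithful (a : BH G) a.2 h))
  have hcl : tauF G b • (1 : redCstar G) ∈ closure (I : Set (redCstar G)) := by
    rw [Metric.mem_closure_iff]
    intro ε hε
    obtain ⟨n, _, g, hg⟩ := hP b ε hε
    refine ⟨_, ?_, by rw [dist_comm, dist_eq_norm]; exact hg⟩
    have h1 : (∑ i : Fin n, uu (g i) * b * uu (g i)⁻¹) ∈ I :=
      sum_mem fun i _ => I.mul_mem_right _ _ (I.mul_mem_left _ _ hbI)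
    have h2 := I.mul_mem_left ((n : ℂ)⁻¹ • 1) _ h1
    rw [smul_mul_assoc, one_mul] at h2
    exact h2
  rw [hc.closure_eq] at hcl
  have h1 := I.mul_mem_left ((tauF G b)⁻¹ • 1) _ hcl
  rw [smul_mul_assoc, one_mul, smul_smul, inv_mul_cancel₀ hτ, one_smul] at h1
  rw [eq_top_iff]
  intro x _
  have := I.mul_mem_left x _ h1
  rwa [mul_one] at this


/-- **Theorem (Kennedy; Haagerup).** A discrete group is C*-simple if and only if it has
Powers' averaging property. -/
theorem cstarSimple_iff_powersAveraging (G : Type u) [Group G] :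
    IsCstarSimple G ↔ HasPowersAveraging G := by
  exact ⟨powers_of_simple, simple_of_powers⟩
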